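/- ∑_{n=0}^∞ ((1)_n)³/((3/2)_n)³ · ( (42√5 + 30)/32 · n + (26√5 + 14)/32 ) · (1/2^{6n+3}) · ((√5 − 1)/2)^{8n+4} = π²/240. -/

import Mathlib

open Real


namespace S9
open Complex Filter Topology ModularForm EisensteinSeries
open UpperHalfPlane hiding I
open scoped Real MatrixGroups ArithmeticFunction.sigma

/-- the filter at the cusp -/
noncomputable abbrev Icusp : Filter ℂ := Filter.comap Complex.im atTop

lemma tendsto_Icusp {f : ℂ → ℂ} {c : ℂ} (hf : Tendsto f Icusp (𝓝 c)) :
    Tendsto (fun z : ℍ => f z) atImInfty (𝓝 c) := by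
  refine hf.comp ?_
  rw [tendsto_comap_iff]
  exact tendsto_comap

theorem LZ {f : ℂ → ℂ} (k : ℕ) (hk : k < 12) (hd : ∀ z : ℂ, 0 < z.im → DifferentiableAt ℂ f z)
    (hT : ∀ z : ℂ, 0 < z.im → f (z + 1) = f z)
    (hS : ∀ z : ℂ, 0 < z.im → f (-1 / z) = z ^ k * f z)
    (h0 : Tendsto f Icusp (𝓝 0)) : ∀ z : ℂ, 0 < z.im → f z = 0 := by
  set g : ℍ → ℂ := fun z => f z with hg
  have gT : g ∣[(k : ℤ)] ModularGroup.T = g := by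
    ext z
    rw [SL_slash_apply, ModularGroup.denom_apply, modular_T_smul, ModularGroup.T]
    have := hT z z.2
    simp [hg, ← this, add_comm]
  have gS : g ∣[(k : ℤ)] ModularGroup.S = g := by
    ext z
    rw [SlashInvariantForm.slash_S_apply]
    have := hS z z.2
    have hz : (z : ℂ) ≠ 0 := z.ne_zero
    simp only [hg, zpow_neg, zpow_natCast]
    rw [show (-(z:ℂ))⁻¹ = -1 / (z:ℂ) by field_simp, this]
    field_simp
  let F : CuspForm 𝒮ℒ (k : ℤ) := 
  { toFun := g
    slash_action_eq' := by
      intro A hA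
      obtain ⟨A, rfl⟩ := hA
      exact SlashInvariantForm.slash_action_generators_SL2Z gS gT A
    holo' := by
      rw [UpperHalfPlane.mdifferentiable_iff]
      refine .congr (fun z hz ↦ (hd z hz).differentiableWithinAt) fun z hz ↦ ?_
      simp [hg, ofComplex_apply_of_im_pos hz]
    zero_at_cusps' := by
      intro c hc
      rw [Subgroup.IsArithmetic.isCusp_iff_isCusp_SL2Z] at hc
      rw [OnePoint.isZeroAt_iff_forall_SL2Z hc]
      intro γ _
      rw [SlashInvariantForm.slash_action_generators_SL2Z gS gT]
      exact tendsto_Icusp h0 }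
  have hr := CuspForm.rank_eq_zero_of_weight_lt_twelve (k := (k : ℤ)) (by exact_mod_cast hk)
  have : F = 0 := by
    rw [rank_zero_iff] at hr
    exact Subsingleton.elim _ _
  intro z hz
  have h2 : F ⟨z, hz⟩ = 0 := by rw [this]; rfl
  exact h2

/-! q-series -/

noncomputable def qq (v : ℂ) : ℂ := cexp (2 * π * I * v)

lemma norm_qq (v : ℂ) : ‖qq v‖ = Real.exp (-2 * π * v.im) := by
  rw [qq, Complex.norm_exp]
  simp

lemma qq_add_one (v : ℂ) : qq (v + 1) = qq v := by
  rw [qq, qq, mul_add, Complex.exp_add, mul_one, Complex.exp_two_pi_mul_I, mul_one]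

lemma norm_qq_lt_one {v : ℂ} (hv : 0 < v.im) : ‖qq v‖ < 1 := by
  rw [norm_qq, Real.exp_lt_one_iff]
  have := Real.pi_pos
  nlinarith [mul_pos this hv]

/-- polynomial growth -/
def PG (a : ℕ → ℂ) : Prop := ∃ K : ℕ, ∀ n, ‖a n‖ ≤ (n : ℝ) ^ (K + 1)

lemma PG.mul {a : ℕ → ℂ} (h : PG a) : PG (fun n => n * a n) := by
  obtain ⟨K, hK⟩ := h
  refine ⟨K + 1, fun n => ?_⟩
  rw [norm_mul, Complex.norm_natCast, pow_succ' _ (K + 1)]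
  exact mul_le_mul_of_nonneg_left (hK n) (by positivity)

noncomputable def qs (a : ℕ → ℂ) (v : ℂ) : ℂ := ∑' n, a n * qq v ^ n

lemma PG.summable {a : ℕ → ℂ} (h : PG a) {v : ℂ} (hv : 0 < v.im) :
    Summable (fun n => a n * qq v ^ n) := by
  obtain ⟨K, hK⟩ := h
  refine Summable.of_norm_bounded
    (summable_norm_pow_mul_geometric_of_norm_lt_one (K + 1) (norm_qq_lt_one hv)) fun n => ?_
  rw [norm_mul, norm_mul]
  refine mul_le_mul_of_nonneg_right ?_ (norm_nonneg _)
  rw [norm_pow, Complex.norm_natCast]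
  exact hK n

lemma qs_add_one (a : ℕ → ℂ) (v : ℂ) : qs a (v + 1) = qs a v := by
  simp [qs, qq_add_one]

lemma qq_deriv (n : ℕ) (v : ℂ) : HasDerivAt (fun v => qq v ^ n) (2 * π * I * n * qq v ^ n) v := by
  have : ∀ v, qq v ^ n = cexp (n * (2 * π * I * v)) := by
    intro v; rw [qq, ← Complex.exp_nat_mul]
  simp only [this]
  have h : HasDerivAt (fun v : ℂ => n * (2 * π * I * v)) (n * (2 * π * I * 1)) v :=
    ((hasDerivAt_id v).const_mul _).const_mul _
  refine h.cexp.congr_deriv ?_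
  ring

lemma PG.hasDerivAt {a : ℕ → ℂ} (h : PG a) {v : ℂ} (hv : 0 < v.im) :
    HasDerivAt (qs a) (2 * π * I * qs (fun n => n * a n) v) v := by
  have hs := h.summable hv
  obtain ⟨K, hK⟩ := h
  set δ := v.im / 2
  have hδ : 0 < δ := by positivity
  set s : Set ℂ := {z | δ < z.im}
  have hso : IsOpen s := isOpen_lt continuous_const Complex.continuous_im
  have hsc : IsPreconnected s := (convex_halfSpace_im_gt δ).isPreconnected
  have hvs : v ∈ s := by simp only [s, δ, Set.mem_ofPred_eq]; linarith
  set x := Real.exp (-2 * π * δ)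
  have hx0 : 0 ≤ x := (Real.exp_pos _).le
  have hx : ‖x‖ < 1 := by
    rw [Real.norm_of_nonneg hx0, Real.exp_lt_one_iff]
    nlinarith [mul_pos Real.pi_pos hδ]
  have := hasDerivAt_tsum_of_isPreconnected (u := fun n : ℕ => 2 * π * (((n : ℝ) ^ (K + 2)) * x ^ n))
    (g := fun n v => a n * qq v ^ n) (g' := fun n v => a n * (2 * π * I * n * qq v ^ n))
    (t := s) (y₀ := v) (y := v) ?_ hso hsc ?_ ?_ hvs hs hvs
  · refine HasDerivAt.congr_deriv this ?_
    rw [qs, ← tsum_mul_left]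
    congr 1; ext n; ring
  · exact (summable_pow_mul_geometric_of_norm_lt_one (K + 2) hx).mul_left _
  · intro n y _
    exact (qq_deriv n y).const_mul _
  · intro n y hy
    rw [norm_mul, norm_mul, norm_mul, norm_pow, norm_qq]
    have h1 : ‖(2 * π * I : ℂ)‖ = 2 * π := by
      simp [abs_of_pos Real.pi_pos]
    rw [h1, Complex.norm_natCast]
    have h2 : Real.exp (-2 * π * y.im) ≤ x := by
      apply Real.exp_le_exp.mpr
      have : δ < y.im := hy
      nlinarith [Real.pi_pos]
    have h3 : Real.exp (-2 * π * y.im) ^ n ≤ x ^ n := pow_le_pow_left₀ (Real.exp_pos _).le h2 n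
    calc ‖a n‖ * (2 * π * n * Real.exp (-2 * π * y.im) ^ n)
        ≤ (n : ℝ) ^ (K + 1) * (2 * π * n * x ^ n) := by
          refine mul_le_mul (hK n) ?_ (by positivity) (by positivity)
          refine mul_le_mul_of_nonneg_left h3 (by positivity)
      _ = _ := by ring

lemma tendsto_qq : Tendsto (fun v => ‖qq v‖) Icusp (𝓝 0) := by
  have : (fun v => ‖qq v‖) = (fun t : ℝ => Real.exp (-t)) ∘ (fun t : ℝ => 2 * π * t) ∘ Complex.im := by
    ext v; rw [norm_qq]; simp
  rw [this]
  refine Real.tendsto_exp_neg_atTop_nhds_zero.comp ?_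
  exact (tendsto_id.const_mul_atTop (by positivity)).comp tendsto_comap

lemma eventually_im (c : ℝ) : ∀ᶠ v in Icusp, c < v.im :=
  tendsto_comap.eventually (eventually_gt_atTop c)

lemma PG.tendsto {a : ℕ → ℂ} (h : PG a) : Tendsto (qs a) Icusp (𝓝 0) := by
  obtain ⟨K, hK⟩ := h
  have hs : Summable (fun n : ℕ => (n : ℝ) ^ (K + 1) * (1 / 2 : ℝ) ^ n) :=
    summable_pow_mul_geometric_of_norm_lt_one (K + 1) (by norm_num)
  refine squeeze_zero_norm' (a := fun v => (∑' n : ℕ, (n : ℝ) ^ (K + 1) * (1 / 2 : ℝ) ^ n) * (2 * ‖qq v‖)) ?_ ?_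
  · filter_upwards [tendsto_qq.eventually (eventually_lt_nhds (show (0:ℝ) < 1 / 2 by norm_num))] with v hv
    rw [← tsum_mul_right]
    refine tsum_of_norm_bounded (hs.mul_right _).hasSum fun n => ?_
    rw [norm_mul, norm_pow, mul_assoc]
    rcases n with _ | n
    · have := hK 0
      simp at this
      simp [this]
    · refine mul_le_mul (hK _) ?_ (by positivity) (by positivity)
      rw [pow_succ, pow_succ]
      have := pow_le_pow_left₀ (norm_nonneg (qq v)) hv.le n
      nlinarith [norm_nonneg (qq v)]
  · simpa using (tendsto_qq.const_mul 2).const_mul (∑' n : ℕ, (n : ℝ) ^ (K + 1) * (1 / 2 : ℝ) ^ n)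

lemma PG_sigma (k : ℕ) : PG (fun n => (σ k n : ℂ)) := by
  refine ⟨k, fun n => ?_⟩
  rw [Complex.norm_natCast]
  exact_mod_cast ArithmeticFunction.sigma_le_pow_succ k n

noncomputable def P (v : ℂ) : ℂ := 1 - 24 * qs (fun n => (σ 1 n : ℂ)) v
noncomputable def Q (v : ℂ) : ℂ := 1 + 240 * qs (fun n => (σ 3 n : ℂ)) v
noncomputable def R (v : ℂ) : ℂ := 1 - 504 * qs (fun n => (σ 5 n : ℂ)) v

lemma P_eq (z : ℍ) : E2 z = P z := by
  rw [E2_eq_tsum_cexp, P, qs, ← tsum_zero_pnat_eq_tsum_nat]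
  · simp [qq]
  · exact (PG_sigma 1).summable z.2

lemma Q_eq (z : ℍ) : E₄ z = Q z := by
  have := EisensteinSeries.q_expansion_bernoulli (k := 4) (by norm_num) (by decide) z
  rw [Q, qs, ← tsum_zero_pnat_eq_tsum_nat ((PG_sigma 3).summable z.2)]
  rw [show E₄ z = E (k := 4) (by norm_num) z from rfl, this]
  simp only [show bernoulli 4 = -1 / 30 by decide +kernel]
  simp [qq]
  norm_num

lemma R_eq (z : ℍ) : E₆ z = R z := by
  have := EisensteinSeries.q_expansion_bernoulli (k := 6) (by norm_num) (by decide) z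
  rw [R, qs, ← tsum_zero_pnat_eq_tsum_nat ((PG_sigma 5).summable z.2)]
  rw [show E₆ z = E (k := 6) (by norm_num) z from rfl, this]
  simp only [show bernoulli 6 = 1 / 42 by decide +kernel]
  simp [qq]
  norm_num

lemma im_S {z : ℂ} (hz : 0 < z.im) : 0 < (-1 / z).im := by
  have h : z ≠ 0 := by rintro rfl; simp at hz
  have := Complex.normSq_pos.mpr h
  rw [neg_div, one_div, Complex.neg_im, Complex.inv_im]
  rw [neg_div, neg_neg]; positivity

lemma Q_S {z : ℂ} (hz : 0 < z.im) : Q (-1 / z) = z ^ 4 * Q z := by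
  have h := congrFun (SlashInvariantForm.slash_action_eqn E₄ _ (⟨ModularGroup.S, rfl⟩ : _ ∈ 𝒮ℒ)) ⟨z, hz⟩
  erw [SlashInvariantForm.slash_S_apply, Q_eq, Q_eq] at h
  have hz0 : z ≠ 0 := by rintro rfl; simp at hz
  simp at h
  rw [← h, show -1 / z = -z⁻¹ by field_simp]
  field_simp

lemma R_S {z : ℂ} (hz : 0 < z.im) : R (-1 / z) = z ^ 6 * R z := by
  have h := congrFun (SlashInvariantForm.slash_action_eqn E₆ _ (⟨ModularGroup.S, rfl⟩ : _ ∈ 𝒮ℒ)) ⟨z, hz⟩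
  erw [SlashInvariantForm.slash_S_apply, R_eq, R_eq] at h
  have hz0 : z ≠ 0 := by rintro rfl; simp at hz
  simp at h
  rw [← h, show -1 / z = -z⁻¹ by field_simp]
  field_simp

lemma P_S {z : ℂ} (hz : 0 < z.im) : P (-1 / z) = z ^ 2 * P z + 6 * z / (π * I) := by
  have h := congrFun (E2_slash_action ModularGroup.S) ⟨z, hz⟩
  have hp : (π : ℂ) ≠ 0 := by exact_mod_cast Real.pi_ne_zero
  have hz0 : z ≠ 0 := by rintro rfl; simp at hz
  erw [SlashInvariantForm.slash_S_apply] at h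
  simp [P_eq, D2_S, riemannZeta_two] at h
  rw [show -1 / z = -z⁻¹ by field_simp]
  field_simp at h ⊢
  rw [h]
  linear_combination (-6 * z) * I_mul_I

end S9


namespace S9
open Complex Filter Topology ModularForm EisensteinSeries
open UpperHalfPlane hiding I
open scoped Real MatrixGroups ArithmeticFunction.sigma

noncomputable def DP (v : ℂ) : ℂ := - 24 * qs (fun n => n * (σ 1 n : ℂ)) v
noncomputable def DQ (v : ℂ) : ℂ := 240 * qs (fun n => n * (σ 3 n : ℂ)) v
noncomputable def DR (v : ℂ) : ℂ := - 504 * qs (fun n => n * (σ 5 n : ℂ)) v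

lemma P_d {v : ℂ} (hv : 0 < v.im) : HasDerivAt P (2 * π * I * DP v) v := by
  refine ((((PG_sigma 1).hasDerivAt hv).const_mul 24).const_sub 1).congr_deriv ?_
  rw [DP]; ring
lemma Q_d {v : ℂ} (hv : 0 < v.im) : HasDerivAt Q (2 * π * I * DQ v) v := by
  refine ((((PG_sigma 3).hasDerivAt hv).const_mul 240).const_add 1).congr_deriv ?_
  rw [DQ]; ring
lemma R_d {v : ℂ} (hv : 0 < v.im) : HasDerivAt R (2 * π * I * DR v) v := by
  refine ((((PG_sigma 5).hasDerivAt hv).const_mul 504).const_sub 1).congr_deriv ?_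
  rw [DR]; ring

lemma DP_d {v : ℂ} (hv : 0 < v.im) : DifferentiableAt ℂ DP v :=
  ((PG_sigma 1).mul.hasDerivAt hv).differentiableAt.const_mul _
lemma DQ_d {v : ℂ} (hv : 0 < v.im) : DifferentiableAt ℂ DQ v :=
  ((PG_sigma 3).mul.hasDerivAt hv).differentiableAt.const_mul _
lemma DR_d {v : ℂ} (hv : 0 < v.im) : DifferentiableAt ℂ DR v :=
  ((PG_sigma 5).mul.hasDerivAt hv).differentiableAt.const_mul _

lemma P_T (v : ℂ) : P (v + 1) = P v := by simp [P, qs_add_one]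
lemma Q_T (v : ℂ) : Q (v + 1) = Q v := by simp [Q, qs_add_one]
lemma R_T (v : ℂ) : R (v + 1) = R v := by simp [R, qs_add_one]
lemma DP_T (v : ℂ) : DP (v + 1) = DP v := by simp [DP, qs_add_one]
lemma DQ_T (v : ℂ) : DQ (v + 1) = DQ v := by simp [DQ, qs_add_one]
lemma DR_T (v : ℂ) : DR (v + 1) = DR v := by simp [DR, qs_add_one]

lemma P_lim : Tendsto P Icusp (𝓝 1) := by
  have := ((PG_sigma 1).tendsto.const_mul 24).const_sub 1; rwa [mul_zero, sub_zero] at this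
lemma Q_lim : Tendsto Q Icusp (𝓝 1) := by
  have := ((PG_sigma 3).tendsto.const_mul 240).const_add 1; rwa [mul_zero, add_zero] at this
lemma R_lim : Tendsto R Icusp (𝓝 1) := by
  have := ((PG_sigma 5).tendsto.const_mul 504).const_sub 1; rwa [mul_zero, sub_zero] at this
lemma DP_lim : Tendsto DP Icusp (𝓝 0) := by
  have := (PG_sigma 1).mul.tendsto.const_mul (-24); rwa [mul_zero] at this
lemma DQ_lim : Tendsto DQ Icusp (𝓝 0) := by
  have := (PG_sigma 3).mul.tendsto.const_mul 240; rwa [mul_zero] at this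
lemma DR_lim : Tendsto DR Icusp (𝓝 0) := by
  have := (PG_sigma 5).mul.tendsto.const_mul (-504); rwa [mul_zero] at this

lemma ne_zero_of_im {z : ℂ} (hz : 0 < z.im) : z ≠ 0 := by rintro rfl; simp at hz

lemma S_d {z : ℂ} (hz : z ≠ 0) : HasDerivAt (fun z : ℂ => -1 / z) (1 / z ^ 2) z := by
  have := (hasDerivAt_inv hz).const_mul (-1)
  refine (this.congr_deriv (by field_simp)).congr_of_eventuallyEq ?_
  filter_upwards with x
  rw [div_eq_mul_inv]

lemma ev_im {z : ℂ} (hz : 0 < z.im) : ∀ᶠ w in 𝓝 z, 0 < w.im :=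
  Complex.continuous_im.continuousAt.eventually (eventually_gt_nhds hz)

lemma deriv_S {f Df : ℂ → ℂ} (hf : ∀ v : ℂ, 0 < v.im → HasDerivAt f (2 * π * I * Df v) v)
    {g : ℂ → ℂ} {g' : ℂ} (hg : ∀ z : ℂ, 0 < z.im → f (-1 / z) = g z) {z : ℂ} (hz : 0 < z.im)
    (hg' : HasDerivAt g g' z) : 2 * π * I * Df (-1 / z) = z ^ 2 * g' := by
  have hz0 := ne_zero_of_im hz
  have h1 : HasDerivAt (fun z => f (-1 / z)) (2 * π * I * Df (-1 / z) * (1 / z ^ 2)) z :=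
    (hf _ (im_S hz)).comp z (S_d hz0)
  have h2 : HasDerivAt (fun z => f (-1 / z)) g' z := by
    refine hg'.congr_of_eventuallyEq ?_
    filter_upwards [ev_im hz] with w hw using hg w hw
  have := h1.unique h2
  rw [← this]; field_simp

lemma pi_C : (π : ℂ) ≠ 0 := by exact_mod_cast Real.pi_ne_zero

lemma DP_S {z : ℂ} (hz : 0 < z.im) :
    DP (-1 / z) = z ^ 4 * DP z + z ^ 3 * P z / (π * I) + 3 * z ^ 2 / (π * I) ^ 2 := by
  have h := deriv_S (fun v hv => P_d hv) (fun z hz => P_S hz) hz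
    ((((hasDerivAt_id z).pow 2).mul (P_d hz)).add (((hasDerivAt_id z).const_mul 6).div_const (π * I)))
  have := pi_C
  have hI := I_ne_zero
  refine mul_left_cancel₀ (b := DP (-1 / z)) (a := 2 * π * I) (by simp) ?_
  rw [h]; simp; field_simp; ring

lemma DQ_S {z : ℂ} (hz : 0 < z.im) :
    DQ (-1 / z) = z ^ 6 * DQ z + 2 * z ^ 5 * Q z / (π * I) := by
  have h := deriv_S (fun v hv => Q_d hv) (fun z hz => Q_S hz) hz
    (((hasDerivAt_id z).pow 4).mul (Q_d hz))
  have := pi_C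
  have hI := I_ne_zero
  refine mul_left_cancel₀ (b := DQ (-1 / z)) (a := 2 * π * I) (by simp) ?_
  rw [h]; simp; field_simp; ring

lemma DR_S {z : ℂ} (hz : 0 < z.im) :
    DR (-1 / z) = z ^ 8 * DR z + 3 * z ^ 7 * R z / (π * I) := by
  have h := deriv_S (fun v hv => R_d hv) (fun z hz => R_S hz) hz
    (((hasDerivAt_id z).pow 6).mul (R_d hz))
  have := pi_C
  have hI := I_ne_zero
  refine mul_left_cancel₀ (b := DR (-1 / z)) (a := 2 * π * I) (by simp) ?_
  rw [h]; simp; field_simp; ring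

theorem ram1 {z : ℂ} (hz : 0 < z.im) : DP z = (P z ^ 2 - Q z) / 12 := by
  have := LZ (f := fun z => DP z - (P z ^ 2 - Q z) / 12) 4 (by norm_num) ?_ ?_ ?_ ?_ z hz
  · exact sub_eq_zero.mp this
  · intro z hz
    exact (DP_d hz).sub ((((P_d hz).differentiableAt.pow 2).sub (Q_d hz).differentiableAt).div_const _)
  · intro z _; simp only [DP_T, P_T, Q_T]
  · intro z hz
    have := pi_C
    simp only [DP_S hz, P_S hz, Q_S hz]; field_simp; ring
  · simpa using DP_lim.sub (((P_lim.pow 2).sub Q_lim).div_const 12)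

theorem ram2 {z : ℂ} (hz : 0 < z.im) : DQ z = (P z * Q z - R z) / 3 := by
  have := LZ (f := fun z => DQ z - (P z * Q z - R z) / 3) 6 (by norm_num) ?_ ?_ ?_ ?_ z hz
  · exact sub_eq_zero.mp this
  · intro z hz
    exact (DQ_d hz).sub ((((P_d hz).differentiableAt.mul (Q_d hz).differentiableAt).sub (R_d hz).differentiableAt).div_const _)
  · intro z _; simp only [DQ_T, P_T, Q_T, R_T]
  · intro z hz
    have := pi_C
    simp only [DQ_S hz, P_S hz, Q_S hz, R_S hz]; field_simp; ring
  · simpa using DQ_lim.sub (((P_lim.mul Q_lim).sub R_lim).div_const 3)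

theorem ram3 {z : ℂ} (hz : 0 < z.im) : DR z = (P z * R z - Q z ^ 2) / 2 := by
  have := LZ (f := fun z => DR z - (P z * R z - Q z ^ 2) / 2) 8 (by norm_num) ?_ ?_ ?_ ?_ z hz
  · exact sub_eq_zero.mp this
  · intro z hz
    exact (DR_d hz).sub ((((P_d hz).differentiableAt.mul (R_d hz).differentiableAt).sub ((Q_d hz).differentiableAt.pow 2)).div_const _)
  · intro z _; simp only [DR_T, P_T, Q_T, R_T]
  · intro z hz
    have := pi_C
    simp only [DR_S hz, P_S hz, Q_S hz, R_S hz]; field_simp; ring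
  · simpa using DR_lim.sub (((P_lim.mul R_lim).sub (Q_lim.pow 2)).div_const 2)

end S9


namespace S9
open Complex Filter Topology ModularForm EisensteinSeries
open UpperHalfPlane hiding I
open scoped Real MatrixGroups ArithmeticFunction.sigma

noncomputable def C1 (v : ℂ) : ℂ := 2 * P (2 * v) - P v
noncomputable def C2 (v : ℂ) : ℂ := P (v / 2) / 2 - P v
noncomputable def C3 (v : ℂ) : ℂ := P ((v + 1) / 2) / 2 - P v

lemma im2 {v : ℂ} (hv : 0 < v.im) : 0 < (2 * v).im := by simpa using hv
lemma imh {v : ℂ} (hv : 0 < v.im) : 0 < (v / 2).im := by simpa using hv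
lemma imh1 {v : ℂ} (hv : 0 < v.im) : 0 < ((v + 1) / 2).im := by simpa using hv

lemma C1_T (v : ℂ) : C1 (v + 1) = C1 v := by
  rw [C1, C1, P_T, show 2 * (v + 1) = 2 * v + 1 + 1 by ring, P_T, P_T]
lemma C2_T (v : ℂ) : C2 (v + 1) = C3 v := by
  rw [C2, C3, P_T]
lemma C3_T (v : ℂ) : C3 (v + 1) = C2 v := by
  rw [C2, C3, P_T, show (v + 1 + 1) / 2 = v / 2 + 1 by ring, P_T]

lemma C1_S {v : ℂ} (hv : 0 < v.im) : C1 (-1 / v) = v ^ 2 * C2 v := by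
  have := pi_C
  have h0 := ne_zero_of_im hv
  rw [C1, C2, show 2 * (-1 / v) = -1 / (v / 2) by field_simp, P_S hv, P_S (imh hv)]
  field_simp; ring
lemma C2_S {v : ℂ} (hv : 0 < v.im) : C2 (-1 / v) = v ^ 2 * C1 v := by
  have := pi_C
  have h0 := ne_zero_of_im hv
  rw [C1, C2, show (-1 / v) / 2 = -1 / (2 * v) by field_simp, P_S hv, P_S (im2 hv)]
  field_simp; ring
lemma C3_S {v : ℂ} (hv : 0 < v.im) : C3 (-1 / v) = v ^ 2 * C3 v := by
  have := pi_C
  have h0 := ne_zero_of_im hv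
  set y := (v - 1) / 2 with hy
  have hyi : 0 < y.im := by simpa [hy] using hv
  have hy0 := ne_zero_of_im hyi
  set x := -1 / y - 1 - 1 with hx
  have hxi : 0 < x.im := by simpa [hx] using im_S hyi
  have hx0 := ne_zero_of_im hxi
  have hxy : x * y = - v := by rw [hx]; field_simp; rw [hy]; ring
  have hPx : P x = y ^ 2 * P y + 6 * y / (π * I) := by
    rw [← P_S hyi, ← P_T x, ← P_T (x + 1)]; congr 1; rw [hx]; ring
  have hPy : P ((v + 1) / 2) = P y := by
    rw [← P_T y]; congr 1; rw [hy]; ring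
  clear_value x y
  have hm : (-1 / v + 1) / 2 = -1 / x := by
    have : v = - (x * y) := by rw [hxy]; ring
    have h1 : v = 2 * y + 1 := by rw [hy]; ring
    field_simp
    linear_combination x * h1 + 2 * hxy
  rw [C3, C3, hm, P_S hv, P_S hxi, hPx, hPy]
  have h1 : v = 2 * y + 1 := by rw [hy]; ring
  have h2 : x = - v / y := by rw [← hxy]; field_simp
  rw [h2]
  field_simp
  linear_combination 6 * h1

lemma C1_lim : Tendsto C1 Icusp (𝓝 1) := by
  have h : Tendsto (fun v : ℂ => 2 * v) Icusp Icusp := by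
    rw [tendsto_comap_iff]
    have : Complex.im ∘ (fun v : ℂ => 2 * v) = (fun t : ℝ => 2 * t) ∘ Complex.im := by ext; simp
    rw [this]
    exact (tendsto_id.const_mul_atTop (by norm_num)).comp tendsto_comap
  have := ((P_lim.comp h).const_mul 2).sub P_lim
  refine (this.congr fun x => rfl).trans (le_of_eq ?_)
  norm_num
lemma C2_lim : Tendsto C2 Icusp (𝓝 (-1 / 2)) := by
  have h : Tendsto (fun v : ℂ => v / 2) Icusp Icusp := by
    rw [tendsto_comap_iff]
    have : Complex.im ∘ (fun v : ℂ => v / 2) = (fun t : ℝ => t / 2) ∘ Complex.im := by ext; simp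
    rw [this]
    exact (tendsto_id.atTop_div_const (by norm_num)).comp tendsto_comap
  have := ((P_lim.comp h).div_const 2).sub P_lim
  refine (this.congr fun x => rfl).trans (le_of_eq ?_)
  norm_num
lemma C3_lim : Tendsto C3 Icusp (𝓝 (-1 / 2)) := by
  have h : Tendsto (fun v : ℂ => (v + 1) / 2) Icusp Icusp := by
    rw [tendsto_comap_iff]
    have : Complex.im ∘ (fun v : ℂ => (v + 1) / 2) = (fun t : ℝ => t / 2) ∘ Complex.im := by ext; simp
    rw [this]
    exact (tendsto_id.atTop_div_const (by norm_num)).comp tendsto_comap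
  have := ((P_lim.comp h).div_const 2).sub P_lim
  refine (this.congr fun x => rfl).trans (le_of_eq ?_)
  norm_num

lemma C1_d {v : ℂ} (hv : 0 < v.im) :
    HasDerivAt C1 (2 * π * I * (4 * DP (2 * v) - DP v)) v := by
  have h : HasDerivAt (fun v => P (2 * v)) (2 * π * I * DP (2 * v) * 2) v :=
    (P_d (im2 hv)).comp v (by simpa using (hasDerivAt_id v).const_mul 2)
  refine ((h.const_mul 2).sub (P_d hv)).congr_deriv ?_
  ring
lemma C2_d {v : ℂ} (hv : 0 < v.im) : DifferentiableAt ℂ C2 v := by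
  have h : DifferentiableAt ℂ (fun v => P (v / 2)) v :=
    DifferentiableAt.comp (g := P) (f := fun v : ℂ => v / 2) v (P_d (imh hv)).differentiableAt (by fun_prop)
  exact (h.div_const 2).sub (P_d hv).differentiableAt
lemma C3_d {v : ℂ} (hv : 0 < v.im) : DifferentiableAt ℂ C3 v := by
  have h : DifferentiableAt ℂ (fun v => P ((v + 1) / 2)) v :=
    DifferentiableAt.comp (g := P) (f := fun v : ℂ => (v + 1) / 2) v (P_d (imh1 hv)).differentiableAt (by fun_prop)
  exact (h.div_const 2).sub (P_d hv).differentiableAt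

theorem C_sum {v : ℂ} (hv : 0 < v.im) : C1 v + C2 v + C3 v = 0 := by
  refine LZ (f := fun v => C1 v + C2 v + C3 v) 2 (by norm_num) ?_ ?_ ?_ ?_ v hv
  · intro z hz
    exact ((C1_d hz).differentiableAt.add (C2_d hz)).add (C3_d hz)
  · intro z _; simp only [C1_T, C2_T, C3_T]; ring
  · intro z hz
    simp only [C1_S hz, C2_S hz, C3_S hz]; ring
  · convert (C1_lim.add C2_lim).add C3_lim using 2; norm_num

theorem C_sum2 {v : ℂ} (hv : 0 < v.im) :
    C1 v * C2 v + C2 v * C3 v + C3 v * C1 v + 3 / 4 * Q v = 0 := by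
  refine LZ (f := fun v => C1 v * C2 v + C2 v * C3 v + C3 v * C1 v + 3 / 4 * Q v) 4
    (by norm_num) ?_ ?_ ?_ ?_ v hv
  · intro z hz
    have h1 := (C1_d hz).differentiableAt
    have h2 := (C2_d hz)
    have h3 := (C3_d hz)
    exact (((h1.mul h2).add (h2.mul h3)).add (h3.mul h1)).add ((Q_d hz).differentiableAt.const_mul _)
  · intro z _; simp only [C1_T, C2_T, C3_T, Q_T]; ring
  · intro z hz
    simp only [C1_S hz, C2_S hz, C3_S hz, Q_S hz]; ring
  · convert (((C1_lim.mul C2_lim).add (C2_lim.mul C3_lim)).add (C3_lim.mul C1_lim)).add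
      (Q_lim.const_mul (3 / 4)) using 2; norm_num

theorem C_sum3 {v : ℂ} (hv : 0 < v.im) :
    C1 v * C2 v * C3 v - 1 / 4 * R v = 0 := by
  refine LZ (f := fun v => C1 v * C2 v * C3 v - 1 / 4 * R v) 6
    (by norm_num) ?_ ?_ ?_ ?_ v hv
  · intro z hz
    have h1 := (C1_d hz).differentiableAt
    have h2 := (C2_d hz)
    have h3 := (C3_d hz)
    exact ((h1.mul h2).mul h3).sub ((R_d hz).differentiableAt.const_mul _)
  · intro z _; simp only [C1_T, C2_T, C3_T, R_T]; ring
  · intro z hz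
    simp only [C1_S hz, C2_S hz, C3_S hz, R_S hz]; ring
  · convert ((C1_lim.mul C2_lim).mul C3_lim).sub (R_lim.const_mul (1 / 4)) using 2; norm_num

lemma C3_eq {v : ℂ} (hv : 0 < v.im) : C3 v = - C1 v - C2 v := by
  linear_combination C_sum hv

lemma CQ {v : ℂ} (hv : 0 < v.im) : C1 v ^ 2 + C1 v * C2 v + C2 v ^ 2 = 3 / 4 * Q v := by
  have := C_sum2 hv
  rw [C3_eq hv] at this
  linear_combination - this

lemma CR {v : ℂ} (hv : 0 < v.im) : R v = 4 * C1 v ^ 3 - 3 * Q v * C1 v := by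
  have := C_sum3 hv
  rw [C3_eq hv] at this
  linear_combination -4 * this - 4 * C1 v * CQ hv

lemma disc_ne {v : ℂ} (hv : 0 < v.im) : Q v ^ 3 - R v ^ 2 ≠ 0 := by
  have h := ModularForm.discriminant_eq_E₄_cube_sub_E₆_sq ⟨v, hv⟩
  have h2 := ModularForm.discriminant_ne_zero ⟨v, hv⟩
  rw [h, Q_eq, R_eq] at h2
  intro h3
  apply h2
  simp [h3]

lemma C1Q_ne {v : ℂ} (hv : 0 < v.im) : Q v - 4 * C1 v ^ 2 ≠ 0 := by
  intro h
  apply disc_ne hv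
  rw [CR hv]
  have : Q v = 4 * C1 v ^ 2 := by linear_combination h
  rw [this]; ring

theorem DC1 {v : ℂ} (hv : 0 < v.im) : 
    HasDerivAt C1 (2 * π * I * ((C1 v * P v + Q v - 2 * C1 v ^ 2) / 6)) v := by
  have hd := C1_d hv
  set d := 4 * DP (2 * v) - DP v
  have h1 : HasDerivAt R (2 * π * I * (12 * C1 v ^ 2 * d - 3 * DQ v * C1 v - 3 * Q v * d)) v := by
    have := ((hd.pow 3).const_mul 4).sub (((Q_d hv).const_mul 3).mul hd)
    refine (this.congr_deriv ?_).congr_of_eventuallyEq ?_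
    · simp; ring
    · filter_upwards [ev_im hv] with w hw
      rw [CR hw]; rfl
  have h2 := h1.unique (R_d hv)
  have h3 : 12 * C1 v ^ 2 * d - 3 * DQ v * C1 v - 3 * Q v * d = DR v :=
    mul_left_cancel₀ (a := 2 * π * I) (by simp) h2
  rw [ram2 hv, ram3 hv, CR hv] at h3
  have h4 : d = (C1 v * P v + Q v - 2 * C1 v ^ 2) / 6 := by
    refine mul_left_cancel₀ (C1Q_ne hv) ?_
    linear_combination (-1 / 3) * h3
  rw [← h4]; exact hd

theorem J1 {v : ℂ} (hv : 0 < v.im) : 5 * C1 v ^ 2 = Q v + 4 * Q (2 * v) := by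
  have h := (C1_d hv).unique (DC1 hv)
  have h3 := mul_left_cancel₀ (a := 2 * π * I) (by simp) h
  rw [ram1 hv, ram1 (im2 hv)] at h3
  have h4 : P (2 * v) = (C1 v + P v) / 2 := by rw [C1]; ring
  rw [h4] at h3
  linear_combination 12 * h3

lemma C1_half {v : ℂ} : C1 (v / 2) = -2 * C2 v := by
  rw [C1, C2, show 2 * (v / 2) = v by ring]; ring

end S9


namespace S9
open Complex Filter Topology
open scoped Real ArithmeticFunction.sigma

lemma qs_two (a : ℕ → ℂ) (v : ℂ) :
    qs a (2 * v) = qs (fun n => if Even n then a (n / 2) else 0) v := by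
  have hq : qq (2 * v) = qq v ^ 2 := by
    rw [qq, qq, ← Complex.exp_nat_mul]; congr 1; push_cast; ring
  rw [qs, qs, hq]
  have hi : Function.Injective (fun n : ℕ => 2 * n) := fun a b h => by simpa using h
  rw [← hi.tsum_eq (f := fun n => (if Even n then a (n / 2) else 0) * qq v ^ n)]
  · refine tsum_congr fun n => ?_
    simp [pow_mul]
  · intro n hn
    simp only [Function.mem_support, ne_eq] at hn
    by_cases h : Even n
    · obtain ⟨k, rfl⟩ := h
      exact ⟨k, by simp; ring⟩
    · simp [h] at hn

lemma PG_even {a : ℕ → ℂ} (h : PG a) : PG (fun n => if Even n then a (n / 2) else 0) := by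
  obtain ⟨K, hK⟩ := h
  refine ⟨K, fun n => ?_⟩
  dsimp only
  split_ifs with h
  · refine (hK _).trans ?_
    have : ((n / 2 : ℕ) : ℝ) ≤ n := by exact_mod_cast Nat.div_le_self n 2
    gcongr
  · simp

lemma PG_odd {a : ℕ → ℂ} (h : PG a) : PG (fun n => if Odd n then a n else 0) := by
  obtain ⟨K, hK⟩ := h
  refine ⟨K, fun n => ?_⟩
  dsimp only
  split_ifs with h
  · exact hK n
  · simp

lemma sigma_rec (m : ℕ) : σ 3 (4 * m) + 8 * σ 3 m = 9 * σ 3 (2 * m) := by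
  rcases Nat.eq_zero_or_pos m with rfl | hm
  · simp
  obtain ⟨k, j, hj, rfl⟩ := Nat.exists_eq_two_pow_mul_odd hm.ne'
  have hc : ∀ i, (2 ^ i).Coprime j := fun i => Nat.Coprime.pow_left i hj.coprime_two_left
  have hmul := ArithmeticFunction.isMultiplicative_sigma (k := 3)
  rw [show 4 * (2 ^ k * j) = 2 ^ (k + 2) * j by ring, show 2 * (2 ^ k * j) = 2 ^ (k + 1) * j by ring,
    hmul.map_mul_of_coprime (hc _), hmul.map_mul_of_coprime (hc _), hmul.map_mul_of_coprime (hc _)]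
  have hp : ∀ i, σ 3 (2 ^ (i + 1)) = σ 3 (2 ^ i) + 8 ^ (i + 1) := by
    intro i
    rw [ArithmeticFunction.sigma_apply_prime_pow Nat.prime_two, ArithmeticFunction.sigma_apply_prime_pow Nat.prime_two,
      Finset.sum_range_succ]
    congr 1
    rw [show (8:ℕ) = 2 ^ 3 by norm_num, ← pow_mul, mul_comm]
  rw [hp (k + 1), hp k]
  ring

lemma sigma_rec2 {m : ℕ} (hm : Odd m) : σ 3 (2 * m) = 9 * σ 3 m := by
  have hmul := ArithmeticFunction.isMultiplicative_sigma (k := 3)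
  rw [hmul.map_mul_of_coprime hm.coprime_two_left]
  have : σ 3 2 = 9 := by decide +kernel
  rw [this]

noncomputable def ee (u : ℂ) : ℂ := qs (fun n => if Odd n then (σ 3 n : ℂ) else 0) u

theorem ee_eq {u : ℂ} (hu : 0 < u.im) : 240 * ee u = Q u - 9 * Q (2 * u) + 8 * Q (4 * u) := by
  have h3 := PG_sigma 3
  rw [Q, Q, Q, show 4 * u = 2 * (2 * u) by ring, qs_two _ (2 * u), qs_two _ u, qs_two _ u, ee]
  have h4 := PG_even h3
  have h5 := PG_even h4
  have e : qs (fun n => if Odd n then (σ 3 n : ℂ) else 0) u =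
    qs (fun n => (σ 3 n : ℂ)) u - 9 * qs (fun n => if Even n then (σ 3 (n / 2) : ℂ) else 0) u
      + 8 * qs (fun n => if Even n then if Even (n / 2) then (σ 3 (n / 2 / 2) : ℂ) else 0 else 0) u := by
    have s3 := h3.summable hu
    have s4 := (h4.summable hu).mul_left 9
    have s5 := (h5.summable hu).mul_left 8
    rw [qs, qs, qs, qs, ← tsum_mul_left, ← tsum_mul_left, ← s3.tsum_sub s4, ← (s3.sub s4).tsum_add s5]
    refine tsum_congr fun n => ?_
    rcases Nat.even_or_odd n with h | h
    · have h' : ¬ Odd n := by simpa using h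
      simp only [h', h, if_true, if_false]
      obtain ⟨k, rfl⟩ := h
      have hk : (k + k) / 2 = k := by omega
      rw [hk]
      rcases Nat.even_or_odd k with h2 | h2
      · simp only [h2, if_true]
        obtain ⟨j, rfl⟩ := h2
        have hk : (j + j) / 2 = j := by omega
        rw [hk]
        have := sigma_rec j
        rw [show j + j + (j + j) = 4 * j by ring, show j + j = 2 * j by ring]
        have h2 : (σ 3 (4 * j) : ℂ) + 8 * σ 3 j = 9 * σ 3 (2 * j) := by exact_mod_cast this
        linear_combination - qq u ^ (4 * j) * h2
      · have h3 : ¬ Even k := by simpa using h2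
        simp only [h3, if_false]
        have h2 : (σ 3 (2 * k) : ℂ) = 9 * σ 3 k := by exact_mod_cast sigma_rec2 h2
        rw [show k + k = 2 * k by ring, h2]
        ring
    · have h' : ¬ Even n := by simpa using h
      simp only [h', h, if_true, if_false]
      ring
  rw [e]; ring

noncomputable def b (v : ℂ) : ℂ := -(C1 v + 2 * C2 v) / 3
noncomputable def W (v : ℂ) : ℂ := C1 v ^ 2 - b v ^ 2

lemma b_sq {v : ℂ} (hv : 0 < v.im) : Q v = C1 v ^ 2 + 3 * b v ^ 2 := by
  rw [b]
  linear_combination (-4 / 3) * CQ hv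

lemma ee_b {v : ℂ} (hv : 0 < v.im) : ee (v / 2) = b v * C1 v / 8 := by
  have h1 := ee_eq (imh hv)
  have h2 := J1 (imh hv)
  have h3 := J1 hv
  have h4 := CQ hv
  rw [show 2 * (v / 2) = v by ring] at h1 h2
  rw [show 4 * (v / 2) = 2 * v by ring] at h1
  rw [C1_half] at h2
  rw [b]
  linear_combination (1 / 240) * h1 - (1 / 240) * h2 - (2 / 240) * h3 + (20 / 240) * h4

lemma b_ne {v : ℂ} (hv : 0 < v.im) : b v ≠ 0 := by
  intro h
  have h1 := b_sq hv
  rw [h] at h1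
  apply disc_ne hv
  rw [CR hv, h1]; ring

lemma W_eq {v : ℂ} (hv : 0 < v.im) : W v = (4 * C1 v ^ 2 - Q v) / 3 := by
  rw [b_sq hv, W]; ring

lemma W_ne {v : ℂ} (hv : 0 < v.im) : W v ≠ 0 := by
  rw [W_eq hv]
  intro h
  exact C1Q_ne hv (by linear_combination -3 * h)

/-- normalized derivative -/
def DD (f : ℂ → ℂ) (d v : ℂ) : Prop := HasDerivAt f (2 * π * I * d) v

lemma DD.add {f g : ℂ → ℂ} {d e v : ℂ} (h1 : DD f d v) (h2 : DD g e v) :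
    DD (fun v => f v + g v) (d + e) v := by
  refine (HasDerivAt.add h1 h2).congr_deriv (by ring)
lemma DD.sub {f g : ℂ → ℂ} {d e v : ℂ} (h1 : DD f d v) (h2 : DD g e v) :
    DD (fun v => f v - g v) (d - e) v := by
  refine (HasDerivAt.sub h1 h2).congr_deriv (by ring)
lemma DD.mul {f g : ℂ → ℂ} {d e v : ℂ} (h1 : DD f d v) (h2 : DD g e v) :
    DD (fun v => f v * g v) (d * g v + f v * e) v := by
  refine (HasDerivAt.mul h1 h2).congr_deriv (by ring)
lemma DD.div {f g : ℂ → ℂ} {d e v : ℂ} (h1 : DD f d v) (h2 : DD g e v) (h : g v ≠ 0) :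
    DD (fun v => f v / g v) ((d * g v - f v * e) / g v ^ 2) v := by
  refine (HasDerivAt.div h1 h2 h).congr_deriv (by ring)
lemma DD.cmul {f : ℂ → ℂ} {d v : ℂ} (h1 : DD f d v) (c : ℂ) :
    DD (fun v => c * f v) (c * d) v := by
  refine (HasDerivAt.const_mul c h1).congr_deriv (by ring)
lemma DD.pow2 {f : ℂ → ℂ} {d v : ℂ} (h1 : DD f d v) :
    DD (fun v => f v ^ 2) (2 * f v * d) v := by
  refine (HasDerivAt.pow h1 2).congr_deriv (by simp; ring)
lemma DD.congr {f g : ℂ → ℂ} {d v : ℂ} (h1 : DD f d v) (hv : 0 < v.im)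
    (h : ∀ w : ℂ, 0 < w.im → g w = f w) : DD g d v := by
  refine HasDerivAt.congr_of_eventuallyEq h1 ?_
  filter_upwards [ev_im hv] with w hw using h w hw
lemma DD.val {f : ℂ → ℂ} {d v : ℂ} (h1 : DD f d v) {e : ℂ} (h : d = e) : DD f e v := h ▸ h1
lemma DD.unique {f : ℂ → ℂ} {d e v : ℂ} (h1 : DD f d v) (h2 : DD f e v) : d = e :=
  mul_left_cancel₀ (a := 2 * π * I) (by simp) (HasDerivAt.unique h1 h2)

lemma P_D {v : ℂ} (hv : 0 < v.im) : DD P ((P v ^ 2 - Q v) / 12) v := by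
  rw [← ram1 hv]; exact P_d hv
lemma Q_D {v : ℂ} (hv : 0 < v.im) : DD Q ((P v * Q v - R v) / 3) v := by
  rw [← ram2 hv]; exact Q_d hv
lemma C1_D {v : ℂ} (hv : 0 < v.im) : DD C1 ((C1 v * P v + Q v - 2 * C1 v ^ 2) / 6) v := DC1 hv

lemma W_D {v : ℂ} (hv : 0 < v.im) : DD W (W v * (P v - C1 v) / 3) v := by
  have h := (((C1_D hv).pow2.cmul 4).sub (Q_D hv)).cmul (1 / 3)
  refine (h.congr hv (g := W) fun w hw => by rw [W_eq hw]; ring).val ?_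
  rw [CR hv, W_eq hv]; ring

lemma b_D {v : ℂ} (hv : 0 < v.im) : DD b (b v * (P v + 2 * C1 v) / 6) v := by
  have hb : ∃ d, DD b d v := by
    have : DifferentiableAt ℂ b v :=
      (((C1_d hv).differentiableAt.add ((C2_d hv).const_mul 2)).neg).div_const 3
    refine ⟨deriv b v / (2 * π * I), ?_⟩
    refine this.hasDerivAt.congr_deriv ?_
    have := pi_C
    field_simp
  obtain ⟨d, hd⟩ := hb
  have h1 := hd.pow2
  have h2 := ((Q_D hv).sub (C1_D hv).pow2).cmul (1 / 3)
  have h3 := h1.unique (h2.congr hv (fun w hw => by rw [b_sq hw]; ring))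
  refine hd.val ?_
  refine mul_left_cancel₀ (a := 2 * b v) (by simpa using b_ne hv) ?_
  rw [h3, CR hv, b_sq hv]; ring

noncomputable def zz (v : ℂ) : ℂ := - b v ^ 2 / W v

lemma zz_D {v : ℂ} (hv : 0 < v.im) : DD zz (C1 v * zz v) v := by
  have hW := W_ne hv
  have h := ((b_D hv).pow2.cmul (-1)).div (W_D hv) hW
  refine (h.congr hv (g := zz) fun w hw => by rw [zz]; ring).val ?_
  rw [zz]
  field_simp
  ring

end S9


namespace S9
open Complex Filter Topology
open scoped Real ArithmeticFunction.sigma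

noncomputable def ar (n : ℕ) : ℝ :=
  ((ascPochhammer ℝ n).eval (1 : ℝ)) ^ 3 / ((ascPochhammer ℝ n).eval (3 / 2 : ℝ)) ^ 3

lemma ar_zero : ar 0 = 1 := by simp [ar]
lemma ar_succ (n : ℕ) : ((n : ℝ) + 1 + 1 / 2) ^ 3 * ar (n + 1) = ((n : ℝ) + 1) ^ 3 * ar n := by
  have h : (ascPochhammer ℝ n).eval (3 / 2 : ℝ) ≠ 0 := (ascPochhammer_pos n _ (by norm_num)).ne'
  have h2 : (3 / 2 : ℝ) + n ≠ 0 := by positivity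
  have h3 : (n : ℝ) + 1 + 1 / 2 = 3 / 2 + n := by ring
  rw [ar, ar, ascPochhammer_succ_eval, ascPochhammer_succ_eval, h3]
  field_simp
  ring

lemma ar_bd (n : ℕ) : 0 ≤ ar n ∧ ar n ≤ 1 := by
  induction n with
  | zero => simp [ar_zero]
  | succ n ih =>
    have h := ar_succ n
    have h1 : (0:ℝ) < ((n : ℝ) + 1 + 1 / 2) ^ 3 := by positivity
    have h2 : ((n : ℝ) + 1) ^ 3 ≤ ((n : ℝ) + 1 + 1 / 2) ^ 3 :=
      pow_le_pow_left₀ (by positivity) (by linarith) 3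
    have h3 : (0:ℝ) < ((n : ℝ) + 1) ^ 3 := by positivity
    have h4 : ar (n + 1) = ((n : ℝ) + 1) ^ 3 * ar n / ((n : ℝ) + 1 + 1 / 2) ^ 3 := by
      rw [← h]; field_simp
    rw [h4]
    constructor
    · have := ih.1; positivity
    · rw [div_le_one h1]
      nlinarith [ih.2]

noncomputable def cf (k n : ℕ) : ℂ := ((n : ℂ) + 1 / 2) ^ k * (ar n : ℂ)

lemma cf_bd (k n : ℕ) : ‖cf k n‖ ≤ ((n : ℝ) + 1) ^ k := by
  rw [cf, norm_mul, norm_pow, Complex.norm_real, Real.norm_of_nonneg (ar_bd n).1]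
  have h : ‖(n : ℂ) + 1 / 2‖ ≤ (n : ℝ) + 1 := by
    refine (norm_add_le _ _).trans ?_
    rw [Complex.norm_natCast]; norm_num
  calc _ ≤ ((n : ℝ) + 1) ^ k * 1 := by
        have := (ar_bd n)
        gcongr
        · exact this.1
        · exact this.2
    _ = _ := mul_one _

noncomputable def ph (k : ℕ) (z : ℂ) : ℂ := ∑' n, cf k n * z ^ n

lemma summ_aux (k : ℕ) {x : ℝ} (hx0 : 0 ≤ x) (hx : x < 1) :
    Summable (fun n : ℕ => ((n : ℝ) + 1) ^ k * x ^ n) := by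
  have hx' : ‖x‖ < 1 := by rwa [Real.norm_of_nonneg hx0]
  have h0 : Summable (fun n : ℕ => (n : ℝ) ^ k * x ^ n) :=
    summable_pow_mul_geometric_of_norm_lt_one k hx'
  have h1 : Summable (fun n : ℕ => (2:ℝ) ^ k * ((n : ℝ) ^ k * x ^ n)) := h0.mul_left ((2:ℝ) ^ k)
  refine (summable_nat_add_iff 1).mp ?_
  refine Summable.of_nonneg_of_le (fun n => by positivity) (fun n => ?_) ((summable_nat_add_iff 1).mpr h1)
  rw [← mul_assoc, ← mul_pow]
  gcongr
  push_cast
  linarith [(Nat.cast_nonneg n : (0:ℝ) ≤ n)]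

lemma ph_summable (k : ℕ) {z : ℂ} (hz : ‖z‖ < 1) : Summable (fun n => cf k n * z ^ n) := by
  refine Summable.of_norm_bounded (summ_aux k (norm_nonneg z) hz) fun n => ?_
  rw [norm_mul, norm_pow]
  gcongr
  exact cf_bd k n

lemma ph_d (k : ℕ) {z : ℂ} (hz : ‖z‖ < 1) :
    ∃ d, HasDerivAt (ph k) d z ∧ z * d = ph (k + 1) z - ph k z / 2 := by
  obtain ⟨ρ, hρ1, hρ2⟩ := exists_between hz
  have hρ0 : 0 ≤ ρ := (norm_nonneg z).trans hρ1.le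
  have hm : z ∈ Metric.ball (0:ℂ) ρ := by simpa using hρ1
  refine ⟨∑' n, cf k n * (n * z ^ (n - 1)), ?_, ?_⟩
  · refine hasDerivAt_tsum_of_isPreconnected (u := fun n : ℕ => ((n : ℝ) + 1) ^ k * (n * ρ ^ (n - 1)))
      (g := fun n z => cf k n * z ^ n) (g' := fun n z => cf k n * (n * z ^ (n - 1)))
      (t := Metric.ball (0:ℂ) ρ) (y₀ := z) (y := z) ?_ Metric.isOpen_ball
      (convex_ball (0:ℂ) ρ).isPreconnected ?_ ?_ hm (ph_summable k hz) hm
    · refine (summable_nat_add_iff 1).mp ?_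
      refine Summable.of_nonneg_of_le (fun n => by positivity) (fun n => ?_)
        ((summ_aux (k + 1) hρ0 hρ2).mul_left (2 ^ k))
      simp only [Nat.add_sub_cancel]
      have h1 : (((n + 1 : ℕ) : ℝ) + 1) ^ k ≤ 2 ^ k * ((n : ℝ) + 1) ^ k := by
        rw [← mul_pow]
        gcongr
        push_cast
        linarith [(Nat.cast_nonneg n : (0:ℝ) ≤ n)]
      calc _ ≤ (2 ^ k * ((n : ℝ) + 1) ^ k) * ((n + 1 : ℕ) * ρ ^ n) := by gcongr
        _ = _ := by push_cast; ring
    · intro n y _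
      exact (hasDerivAt_pow n y).const_mul _
    · intro n y hy
      have hy' : ‖y‖ ≤ ρ := by simpa using (Metric.mem_ball.mp hy).le
      rw [norm_mul, norm_mul, norm_pow, Complex.norm_natCast]
      gcongr
      exact cf_bd k n
  · rw [ph, ph, ← tsum_div_const, ← (ph_summable (k+1) hz).tsum_sub ((ph_summable k hz).div_const 2), ← tsum_mul_left]
    refine tsum_congr fun n => ?_
    rcases n with _ | n
    · simp [cf]; ring
    · simp only [cf, Nat.add_sub_cancel]
      push_cast
      ring

lemma ph_ode {z : ℂ} (hz : ‖z‖ < 1) :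
    ph 3 z - z * (ph 3 z + 3 / 2 * ph 2 z + 3 / 4 * ph 1 z + 1 / 8 * ph 0 z) = 1 / 8 := by
  have h : z * (ph 3 z + 3 / 2 * ph 2 z + 3 / 4 * ph 1 z + 1 / 8 * ph 0 z)
      = ∑' n, cf 3 (n + 1) * z ^ (n + 1) := by
    have s3 := ph_summable 3 hz
    have s2 := (ph_summable 2 hz).mul_left (3 / 2)
    have s1 := (ph_summable 1 hz).mul_left (3 / 4)
    have s0 := (ph_summable 0 hz).mul_left (1 / 8)
    rw [ph, ph, ph, ph, ← tsum_mul_left, ← tsum_mul_left, ← tsum_mul_left, ← s3.tsum_add s2,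
      ← (s3.add s2).tsum_add s1, ← ((s3.add s2).add s1).tsum_add s0, ← tsum_mul_left]
    refine tsum_congr fun n => ?_
    have := ar_succ n
    have h2 : ((n : ℂ) + 1 + 1 / 2) ^ 3 * ar (n + 1) = ((n : ℂ) + 1) ^ 3 * ar n := by
      have h3 := congrArg (fun x : ℝ => (x : ℂ)) this
      push_cast at h3
      exact h3
    simp only [cf]
    push_cast
    rw [h2]
    ring
  rw [h, ph, (ph_summable 3 hz).tsum_eq_zero_add]
  simp [cf, ar_zero]
  norm_num

lemma ph_lim (k : ℕ) : ContinuousAt (ph k) 0 := by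
  obtain ⟨d, hd, _⟩ := ph_d k (z := 0) (by simp)
  exact hd.continuousAt

/-- crude bound -/
lemma qs_bd {a : ℕ → ℂ} {K : ℝ} (h : ∀ n, n ≠ 0 → ‖a n‖ ≤ K ^ n) (h0 : a 0 = 0) (hK : 0 ≤ K) {v : ℂ}
    {x : ℝ} (hx : K * ‖qq v‖ ≤ x) (hx1 : x < 1) : ‖qs a v‖ ≤ x / (1 - x) := by
  have hx0 : 0 ≤ x := le_trans (by positivity) hx
  have hs : HasSum (fun n : ℕ => x * x ^ n) (x * (1 - x)⁻¹) :=
    (hasSum_geometric_of_lt_one hx0 hx1).mul_left x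
  have e : qs a v = ∑' n, a (n + 1) * qq v ^ (n + 1) := by
    have h1 : Summable (fun n => a n * qq v ^ n) := by
      refine Summable.of_norm_bounded (summable_geometric_of_lt_one hx0 hx1) fun n => ?_
      rcases eq_or_ne n 0 with rfl | hn
      · simp [h0]
      rw [norm_mul, norm_pow]
      calc _ ≤ K ^ n * ‖qq v‖ ^ n := by gcongr; exact h n hn
        _ ≤ _ := by rw [← mul_pow]; gcongr
    rw [qs, h1.tsum_eq_zero_add, h0]; simp
  rw [e, div_eq_mul_inv]
  refine tsum_of_norm_bounded hs fun n => ?_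
  rw [norm_mul, norm_pow]
  calc _ ≤ K ^ (n + 1) * ‖qq v‖ ^ (n + 1) := by gcongr; exact h _ (by simp)
    _ ≤ x ^ (n + 1) := by rw [← mul_pow]; gcongr
    _ = _ := by ring

lemma sigma_bd (k n : ℕ) : ‖(σ k n : ℂ)‖ ≤ ((2:ℝ) ^ (k + 1)) ^ n := by
  rw [Complex.norm_natCast, ← pow_mul, mul_comm, pow_mul]
  have h1 : (n : ℝ) ≤ 2 ^ n := by exact_mod_cast (Nat.lt_two_pow_self).le
  calc (σ k n : ℝ) ≤ (n : ℝ) ^ (k + 1) := by exact_mod_cast ArithmeticFunction.sigma_le_pow_succ k n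
    _ ≤ _ := by gcongr

lemma exp_bd {v : ℂ} (hv : 1.9 < v.im) : ‖qq v‖ ≤ 1 / 50000 ∧ ‖qq (v / 2)‖ ≤ 1 / 223 := by
  have h1 : ‖qq v‖ ≤ 1 / 50000 := by
    rw [norm_qq]
    have h2 : Real.exp (-2 * π * v.im) ≤ Real.exp (-11) := by
      apply Real.exp_le_exp.mpr
      nlinarith [Real.pi_gt_three]
    have h3 : Real.exp (-11) = (Real.exp 1 ^ 11)⁻¹ := by
      rw [← Real.exp_nat_mul, ← Real.exp_neg]; norm_num
    have h4 : (50000 : ℝ) ≤ Real.exp 1 ^ 11 := by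
      calc (50000 : ℝ) ≤ 2.7 ^ 11 := by norm_num
        _ ≤ _ := by gcongr; linarith [Real.exp_one_gt_d9]
    rw [h3] at h2
    refine h2.trans ?_
    rw [one_div]
    exact inv_anti₀ (by norm_num) h4
  refine ⟨h1, ?_⟩
  have h5 : ‖qq v‖ = ‖qq (v / 2)‖ ^ 2 := by
    rw [← norm_pow]; congr 1
    rw [qq, qq, ← Complex.exp_nat_mul]; congr 1; push_cast; ring
  rw [h5] at h1
  refine abs_le_of_sq_le_sq' (h1.trans (by norm_num)) (by norm_num) |>.2

lemma C1_bd {v : ℂ} (hv : 1.9 < v.im) : ‖C1 v - 1‖ ≤ 1 / 100 := by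
  have h1 := (exp_bd hv).1
  have h2 : ‖qq (2 * v)‖ ≤ 1 / 50000 := (exp_bd (v := 2 * v) (by simp; linarith)).1
  have e : C1 v - 1 = 24 * qs (fun n => (σ 1 n : ℂ)) v - 48 * qs (fun n => (σ 1 n : ℂ)) (2 * v) := by
    rw [C1, P, P]; ring
  have b1 : ‖qs (fun n => (σ 1 n : ℂ)) v‖ ≤ _ := qs_bd (fun n _ => sigma_bd 1 n) (by simp) (by positivity)
    (x := 1 / 10000) (by linarith) (by norm_num)
  have b2 : ‖qs (fun n => (σ 1 n : ℂ)) (2 * v)‖ ≤ _ := qs_bd (fun n _ => sigma_bd 1 n) (by simp) (by positivity)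
    (x := 1 / 10000) (by linarith) (by norm_num)
  rw [e]
  refine (norm_sub_le _ _).trans ?_
  rw [norm_mul, norm_mul]
  norm_num at b1 b2 ⊢
  linarith

lemma ee_bd {v : ℂ} (hv : 1.9 < v.im) : ‖ee (v / 2)‖ ≤ 16 / 207 := by
  have h1 := (exp_bd hv).2
  refine (qs_bd (K := 16) (x := 16 / 223) (fun n _ => ?_) (by simp) (by norm_num) (by linarith) (by norm_num)).trans (by norm_num)
  split_ifs
  · exact (sigma_bd 3 n).trans (by norm_num)
  · simp

lemma C1_lb {v : ℂ} (hv : 1.9 < v.im) : 99 / 100 ≤ ‖C1 v‖ := by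
  have h := C1_bd hv
  have := norm_sub_norm_le (1:ℂ) (1 - C1 v)
  rw [norm_sub_rev (1:ℂ) (C1 v)] at this
  simp at this
  linarith

lemma b_bd {v : ℂ} (hv : 1.9 < v.im) : ‖b v‖ ≤ 63 / 100 := by
  have h1 := ee_b (v := v) (by linarith)
  have h2 := ee_bd hv
  have h3 := C1_lb hv
  rw [h1, norm_div, norm_mul] at h2
  norm_num at h2
  nlinarith [norm_nonneg (b v)]

lemma zz_bd {v : ℂ} (hv : 1.9 < v.im) : ‖zz v‖ < 1 := by
  have h2 := b_bd hv
  have h3 := C1_lb hv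
  have hW : ‖C1 v‖ ^ 2 - ‖b v‖ ^ 2 ≤ ‖W v‖ := by
    rw [W, ← norm_pow, ← norm_pow]; exact norm_sub_norm_le _ _
  rw [zz, norm_div, norm_neg, norm_pow]
  have : ‖b v‖ ^ 2 < ‖W v‖ := by nlinarith [norm_nonneg (b v)]
  rw [div_lt_one (by nlinarith [sq_nonneg ‖b v‖])]
  exact this

lemma zero_of_D {f : ℂ → ℂ} (hd : ∀ v : ℂ, 1.9 < v.im → DD f 0 v) (h0 : Tendsto f Icusp (𝓝 0)) :
    ∀ v : ℂ, 1.9 < v.im → f v = 0 := by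
  intro v hv
  have hc : Convex ℝ {z : ℂ | 1.9 < z.im} := convex_halfSpace_im_gt _
  have ho : IsOpen {z : ℂ | (1.9:ℝ) < z.im} := isOpen_lt continuous_const Complex.continuous_im
  have hk : ∀ w : ℂ, 1.9 < w.im → f w = f v := by
    intro w hw
    refine ho.is_const_of_deriv_eq_zero hc.isPreconnected
      (fun z hz => (HasDerivAt.differentiableAt (hd z hz)).differentiableWithinAt) ?_ hw hv
    intro z hz
    have := HasDerivAt.deriv (hd z hz)
    simpa using this
  have h2 : Tendsto f Icusp (𝓝 (f v)) := by
    refine tendsto_const_nhds.congr' ?_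
    filter_upwards [eventually_im 1.9] with w hw using (hk w hw).symm
  have : Icusp.NeBot := by
    rw [Filter.comap_neBot_iff]
    intro t ht
    obtain ⟨y, hy⟩ := (nonempty_of_mem ht)
    exact ⟨⟨0, y⟩, hy⟩
  exact tendsto_nhds_unique h2 h0

end S9


namespace S9
open Complex Filter Topology
open scoped Real ArithmeticFunction.sigma

lemma ph_D (k : ℕ) {v : ℂ} (hv : 1.9 < v.im) :
    DD (fun v => ph k (zz v)) (C1 v * (ph (k + 1) (zz v) - ph k (zz v) / 2)) v := by
  obtain ⟨d, hd, h2⟩ := ph_d k (zz_bd hv)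
  have h3 : HasDerivAt zz (2 * π * I * (C1 v * zz v)) v := zz_D (by linarith)
  refine (hd.comp v h3).congr_deriv ?_
  rw [← h2]; ring

noncomputable def bW (v : ℂ) : ℂ := b v / W v

lemma bW_D {v : ℂ} (hv : 0 < v.im) : DD bW (bW v * (4 * C1 v - P v) / 6) v := by
  have hW := W_ne hv
  have h := (b_D hv).div (W_D hv) hW
  refine (h.congr hv (g := bW) fun w hw => by rw [bW]).val ?_
  rw [bW]
  field_simp
  ring

noncomputable def G0 (v : ℂ) : ℂ := bW v * ph 0 (zz v)
noncomputable def G1 (v : ℂ) : ℂ :=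
  bW v * (C1 v * ph 1 (zz v) - 1 / 6 * ((P v - C1 v) * ph 0 (zz v)))
noncomputable def G2 (v : ℂ) : ℂ :=
  bW v * (C1 v ^ 2 * ph 2 (zz v) + 1 / 6 * ((Q v - C1 v * P v) * ph 1 (zz v))
    + 1 / 72 * ((P v ^ 2 - 2 * (C1 v * P v) - 2 * C1 v ^ 2 + 3 * Q v) * ph 0 (zz v)))

lemma G0_D {v : ℂ} (hv : 1.9 < v.im) : DD G0 (G1 v) v := by
  have h0 : 0 < v.im := by linarith
  refine ((bW_D h0).mul (ph_D 0 hv)).val ?_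
  simp only [G1, zero_add]; ring

lemma G1_D {v : ℂ} (hv : 1.9 < v.im) : DD G1 (G2 v) v := by
  have h0 : 0 < v.im := by linarith
  refine ((bW_D h0).mul (((C1_D h0).mul (ph_D 1 hv)).sub
    ((((P_D h0).sub (C1_D h0)).mul (ph_D 0 hv)).cmul (1 / 6)))).val ?_
  simp only [G2, zero_add, Nat.reduceAdd]; ring

lemma G2_D {v : ℂ} (hv : 1.9 < v.im) : DD G2 (ee (v / 2)) v := by
  have h0 : 0 < v.im := by linarith
  have hW := W_ne h0
  refine ((bW_D h0).mul ((((C1_D h0).pow2.mul (ph_D 2 hv)).add 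
    ((((Q_D h0).sub ((C1_D h0).mul (P_D h0))).mul (ph_D 1 hv)).cmul (1 / 6))).add
    ((((((P_D h0).pow2.sub (((C1_D h0).mul (P_D h0)).cmul 2)).sub ((C1_D h0).pow2.cmul 2)).add
      ((Q_D h0).cmul 3)).mul (ph_D 0 hv)).cmul (1 / 72)))).val ?_
  have ho := ph_ode (zz_bd hv)
  have ho2 : C1 v ^ 2 * ph 3 (zz v) + b v ^ 2 * (3 / 2 * ph 2 (zz v) + 3 / 4 * ph 1 (zz v) + 1 / 8 * ph 0 (zz v))
      = W v / 8 := by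
    have hz : W v * zz v = - b v ^ 2 := by rw [zz]; field_simp
    have hC : C1 v ^ 2 = W v + b v ^ 2 := by rw [W]; ring
    linear_combination W v * ho + (ph 3 (zz v) + 3 / 2 * ph 2 (zz v) + 3 / 4 * ph 1 (zz v) + 1 / 8 * ph 0 (zz v)) * hz
      + ph 3 (zz v) * hC
  simp only [zero_add, Nat.reduceAdd]
  have hb : b v = bW v * W v := by rw [bW]; field_simp
  rw [ee_b h0]
  have hrhs : b v * C1 v / 8 = bW v * C1 v * (W v / 8) := by rw [hb]; ring
  rw [hrhs, ← ho2, CR h0, b_sq h0]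
  ring

/-- the Eichler integral -/
noncomputable def hh (n : ℕ) : ℂ := (σ 3 n : ℂ) / (n : ℂ) ^ 3
noncomputable def ho (n : ℕ) : ℂ := if Odd n then hh n else 0

lemma PG_hh : PG hh := by
  refine ⟨0, fun n => ?_⟩
  rcases Nat.eq_zero_or_pos n with rfl | hn
  · simp [hh]
  have hn' : (0:ℝ) < n := by exact_mod_cast hn
  rw [hh, norm_div, norm_pow, Complex.norm_natCast, Complex.norm_natCast, div_le_iff₀ (by positivity)]
  have : (σ 3 n : ℝ) ≤ (n : ℝ) ^ 4 := by exact_mod_cast ArithmeticFunction.sigma_le_pow_succ 3 n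
  refine this.trans (le_of_eq (by ring))

lemma PG_ho : PG ho := PG_odd PG_hh

lemma qs_half_D {a : ℕ → ℂ} (h : PG a) {v : ℂ} (hv : 0 < v.im) :
    DD (fun v => qs a (v / 2)) (1 / 2 * qs (fun n => n * a n) (v / 2)) v := by
  have h1 := h.hasDerivAt (imh hv)
  have h2 : HasDerivAt (fun v : ℂ => v / 2) (1 / 2) v := (hasDerivAt_id v).div_const 2
  refine (h1.comp v h2).congr_deriv ?_
  ring

lemma half_lim : Tendsto (fun v : ℂ => v / 2) Icusp Icusp := by
  rw [tendsto_comap_iff]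
  have : Complex.im ∘ (fun v : ℂ => v / 2) = (fun t : ℝ => t / 2) ∘ Complex.im := by ext; simp
  rw [this]
  exact (tendsto_id.atTop_div_const (by norm_num)).comp tendsto_comap

lemma b_lim : Tendsto b Icusp (𝓝 0) := by
  have := ((C1_lim.add (C2_lim.const_mul 2)).neg).div_const 3
  refine (this.congr fun x => rfl).trans (le_of_eq ?_)
  norm_num
lemma W_lim : Tendsto W Icusp (𝓝 1) := by
  have := (C1_lim.pow 2).sub (b_lim.pow 2)
  refine (this.congr fun x => rfl).trans (le_of_eq ?_)
  norm_num
lemma bW_lim : Tendsto bW Icusp (𝓝 0) := by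
  have := b_lim.div W_lim one_ne_zero
  refine (this.congr fun x => rfl).trans (le_of_eq ?_)
  norm_num
lemma zz_lim : Tendsto zz Icusp (𝓝 0) := by
  have := ((b_lim.pow 2).neg).div W_lim one_ne_zero
  refine (this.congr fun x => rfl).trans (le_of_eq ?_)
  norm_num
lemma phz_lim (k : ℕ) : Tendsto (fun v => ph k (zz v)) Icusp (𝓝 (ph k 0)) :=
  (ph_lim k).tendsto.comp zz_lim

lemma G0_lim : Tendsto G0 Icusp (𝓝 0) := by
  have := bW_lim.mul (phz_lim 0)
  rw [zero_mul] at this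
  exact this
lemma G1_lim : Tendsto G1 Icusp (𝓝 0) := by
  have := bW_lim.mul ((C1_lim.mul (phz_lim 1)).sub (((P_lim.sub C1_lim).mul (phz_lim 0)).const_mul (1 / 6)))
  rw [zero_mul] at this
  exact this
lemma G2_lim : Tendsto G2 Icusp (𝓝 0) := by
  have := bW_lim.mul ((((C1_lim.pow 2).mul (phz_lim 2)).add 
    (((Q_lim.sub (C1_lim.mul P_lim)).mul (phz_lim 1)).const_mul (1 / 6))).add
    ((((((P_lim.pow 2).sub ((C1_lim.mul P_lim).const_mul 2)).sub ((C1_lim.pow 2).const_mul 2)).add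
      (Q_lim.const_mul 3)).mul (phz_lim 0)).const_mul (1 / 72)))
  rw [zero_mul] at this
  exact this

lemma qsh_lim {a : ℕ → ℂ} (h : PG a) (c : ℂ) : Tendsto (fun v => c * qs a (v / 2)) Icusp (𝓝 0) := by
  have := (h.tendsto.comp half_lim).const_mul c
  rw [mul_zero] at this
  exact this

theorem G2_eq {v : ℂ} (hv : 1.9 < v.im) : G2 v = 2 * qs (fun n => n * (n * ho n)) (v / 2) := by
  refine sub_eq_zero.mp (zero_of_D (f := fun v => G2 v - 2 * qs (fun n => n * (n * ho n)) (v / 2)) ?_ ?_ v hv)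
  · intro v hv
    have h0 : 0 < v.im := by linarith
    refine ((G2_D hv).sub ((qs_half_D PG_ho.mul.mul h0).cmul 2)).val ?_
    rw [sub_eq_zero, ee]
    rw [← mul_assoc]; norm_num
    congr 1
    ext n
    simp only [ho]
    split_ifs with h
    · have : (n : ℂ) ≠ 0 := by
        rintro h2
        have : n = 0 := by exact_mod_cast h2
        subst this
        simp at h
      rw [hh]; field_simp
    · simp
  · have := G2_lim.sub (qsh_lim PG_ho.mul.mul 2)
    rwa [sub_zero] at this

theorem G1_eq {v : ℂ} (hv : 1.9 < v.im) : G1 v = 4 * qs (fun n => n * ho n) (v / 2) := by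
  refine sub_eq_zero.mp (zero_of_D (f := fun v => G1 v - 4 * qs (fun n => n * ho n) (v / 2)) ?_ ?_ v hv)
  · intro v hv
    have h0 : 0 < v.im := by linarith
    refine ((G1_D hv).sub ((qs_half_D PG_ho.mul h0).cmul 4)).val ?_
    rw [G2_eq hv]; ring
  · have := G1_lim.sub (qsh_lim PG_ho.mul 4)
    rwa [sub_zero] at this

theorem G0_eq {v : ℂ} (hv : 1.9 < v.im) : G0 v = 8 * qs ho (v / 2) := by
  refine sub_eq_zero.mp (zero_of_D (f := fun v => G0 v - 8 * qs ho (v / 2)) ?_ ?_ v hv)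
  · intro v hv
    have h0 : 0 < v.im := by linarith
    refine ((G0_D hv).sub ((qs_half_D PG_ho h0).cmul 8)).val ?_
    rw [G1_eq hv]; ring
  · have := G0_lim.sub (qsh_lim PG_ho 8)
    rwa [sub_zero] at this

end S9


namespace S9
open Complex Filter Topology
open scoped Real ArithmeticFunction.sigma

lemma hasSum_pnat {f : ℕ → ℂ} {a : ℂ} (h : HasSum f a) (h0 : f 0 = 0) :
    HasSum (fun n : ℕ+ => f n) a := by
  refine (PNat.coe_injective.hasSum_iff (f := f) ?_).2 h
  intro x hx
  rcases Nat.eq_zero_or_pos x with rfl | hp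
  · exact h0
  · exact absurd ⟨⟨x, hp⟩, rfl⟩ hx

lemma Z2 : HasSum (fun n : ℕ+ => 1 / (n : ℂ) ^ 2) ((π : ℂ) ^ 2 / 6) := by
  have h := (Complex.hasSum_ofReal).2 hasSum_zeta_two
  push_cast at h
  exact hasSum_pnat h (by simp)

lemma Z4 : HasSum (fun n : ℕ+ => 1 / (n : ℂ) ^ 4) ((π : ℂ) ^ 4 / 90) := by
  have h := (Complex.hasSum_ofReal).2 hasSum_zeta_four
  push_cast at h
  exact hasSum_pnat h (by simp)

lemma Z3s : Summable (fun n : ℕ+ => 1 / (n : ℂ) ^ 3) := by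
  have h : Summable (fun n : ℕ => 1 / (n : ℂ) ^ 3) := by
    refine Summable.of_norm ?_
    simp only [norm_div, norm_pow, Complex.norm_natCast, norm_one]
    exact Real.summable_one_div_nat_pow.2 (by norm_num)
  exact (hasSum_pnat h.hasSum (by simp)).summable

lemma hh_eq (n : ℕ+) (r : ℂ) :
    ∑ x ∈ (n : ℕ).divisorsAntidiagonal, r ^ (x.1 * x.2) / (x.1 : ℂ) ^ 3 = hh n * r ^ (n : ℕ) := by
  have hn : (n : ℂ) ≠ 0 := by simp
  rw [hh, ArithmeticFunction.sigma_apply, Nat.sum_divisorsAntidiagonal' (fun x y => r ^ (x * y) / (x : ℂ) ^ 3)]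
  push_cast
  rw [Finset.sum_div, Finset.sum_mul]
  refine Finset.sum_congr rfl fun i hi => ?_
  have hd := Nat.dvd_of_mem_divisors hi
  have hi0 : (i : ℂ) ≠ 0 := by
    have := Nat.pos_of_mem_divisors hi
    exact_mod_cast this.ne'
  rw [Nat.div_mul_cancel hd, Nat.cast_div hd hi0]
  field_simp

lemma lam_summable {r : ℂ} (hr : ‖r‖ < 1) :
    Summable fun c : ℕ+ × ℕ+ => r ^ (c.1 * c.2 : ℕ) / (c.1 : ℂ) ^ 3 := by
  have h := (summable_prod_mul_pow (𝕜 := ℂ) 0 hr).norm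
  refine Summable.of_norm_bounded h fun c => ?_
  have h1 : (1 : ℝ) ≤ (c.1 : ℕ) := by exact_mod_cast c.1.pos
  rw [norm_div, norm_pow, norm_pow, Complex.norm_natCast, pow_zero, one_mul, norm_pow]
  exact div_le_self (by positivity) (one_le_pow₀ h1)

lemma lam_tsum {v : ℂ} (hv : 0 < v.im) :
    ∑' n : ℕ+, ∑' k : ℕ+, qq v ^ (n * k : ℕ) / (n : ℂ) ^ 3 = qs hh v := by
  have hr := norm_qq_lt_one hv
  have hs := lam_summable hr
  rw [← hs.tsum_prod (f := fun c : ℕ+ × ℕ+ => qq v ^ (c.1 * c.2 : ℕ) / (c.1 : ℂ) ^ 3)]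
  rw [← sigmaAntidiagonalEquivProd.tsum_eq]
  refine (Summable.tsum_sigma ((sigmaAntidiagonalEquivProd.summable_iff).2 hs)).trans ?_
  rw [qs, ← (hasSum_pnat (PG_hh.summable hv).hasSum (by simp [hh])).tsum_eq]
  refine tsum_congr fun n => ?_
  rw [tsum_fintype, ← hh_eq n]
  simp only [Function.comp_apply, sigmaAntidiagonalEquivProd, divisorsAntidiagonalFactors, Equiv.coe_fn_mk, PNat.mk_coe]
  rw [Finset.univ_eq_attach, (n : ℕ).divisorsAntidiagonal.sum_attach (fun x : ℕ × ℕ => qq v ^ (x.1 * x.2) / (x.1 : ℂ) ^ 3)]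

noncomputable def T (t : ℂ) (p : ℕ+ × ℕ+) : ℂ := 1 / ((p.1 : ℂ) ^ 2 * ((p.1 : ℂ) ^ 2 * t ^ 2 - (p.2 : ℂ) ^ 2))

lemma lowb (t : ℂ) (ht : 0 < t.im) (a b : ℝ) : |b| * t.im ≤ ‖(a : ℂ) * t + b‖ * ‖t‖ := by
  have h : ‖(a : ℂ) * t + b‖ * ‖t‖ = ‖((a : ℂ) * t + b) * (starRingEnd ℂ) t‖ := by simp
  rw [h]
  refine le_trans (le_of_eq ?_) (Complex.abs_im_le_norm _)
  have : (((a : ℂ) * t + b) * (starRingEnd ℂ) t).im = - (b * t.im) := by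
    simp; ring
  rw [this, abs_neg, abs_mul, abs_of_pos ht]

lemma T_ne {t : ℂ} (ht : 0 < t.im) (n m : ℕ+) : (n : ℂ) ^ 2 * t ^ 2 - (m : ℂ) ^ 2 ≠ 0 := by
  have hm : (0 : ℝ) < (m : ℕ) := by exact_mod_cast m.pos
  have h1 := lowb t ht (n : ℕ) (m : ℕ)
  have h2 := lowb t ht (n : ℕ) (-(m : ℕ))
  rw [abs_neg] at h2
  rw [abs_of_pos hm] at h1 h2
  have hp : 0 < ((m : ℕ) : ℝ) * t.im := by positivity
  have e : (n : ℂ) ^ 2 * t ^ 2 - (m : ℂ) ^ 2 = ((((n : ℕ) : ℝ) : ℂ) * t + ((m : ℕ) : ℝ)) * ((((n : ℕ) : ℝ) : ℂ) * t + ((-((m : ℕ) : ℝ) : ℝ) : ℂ)) := by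
    push_cast; ring
  rw [e]
  refine mul_ne_zero ?_ ?_
  · intro h; rw [h] at h1; simp at h1; linarith
  · intro h; rw [h] at h2; simp at h2; linarith

lemma T_summable {t : ℂ} (ht : 0 < t.im) : Summable (T t) := by
  have ht0 : 0 < ‖t‖ := by
    rw [norm_pos_iff]; rintro rfl; simp at ht
  have h : Summable (fun p : ℕ+ × ℕ+ => (‖t‖ / t.im) ^ 2 * ‖(1 / (p.1 : ℂ) ^ 2) * (1 / (p.2 : ℂ) ^ 2)‖) := by
    refine Summable.mul_left _ ?_
    have hz := Z2.summable.norm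
    have := hz.mul_of_nonneg hz (fun _ => norm_nonneg _) (fun _ => norm_nonneg _)
    refine this.congr fun p => ?_
    rw [norm_mul]
  refine Summable.of_norm_bounded h fun p => ?_
  obtain ⟨n, m⟩ := p
  have hm : (0 : ℝ) < (m : ℕ) := by exact_mod_cast m.pos
  have hn : (0 : ℝ) < (n : ℕ) := by exact_mod_cast n.pos
  have h1 := lowb t ht (n : ℕ) (m : ℕ)
  have h2 := lowb t ht (n : ℕ) (-(m : ℕ))
  rw [abs_neg] at h2
  rw [abs_of_pos hm] at h1 h2
  have e : (n : ℂ) ^ 2 * t ^ 2 - (m : ℂ) ^ 2 = ((((n : ℕ) : ℝ) : ℂ) * t + ((m : ℕ) : ℝ)) * ((((n : ℕ) : ℝ) : ℂ) * t + ((-((m : ℕ) : ℝ) : ℝ) : ℂ)) := by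
    push_cast; ring
  have h3 : ((m : ℕ) * t.im) ^ 2 ≤ ‖(n : ℂ) ^ 2 * t ^ 2 - (m : ℂ) ^ 2‖ * ‖t‖ ^ 2 := by
    rw [e, norm_mul, sq]
    calc _ ≤ _ := mul_le_mul h1 h2 (by positivity) (by positivity)
      _ = _ := by ring
  have hpos : 0 < ‖(n : ℂ) ^ 2 * t ^ 2 - (m : ℂ) ^ 2‖ := norm_pos_iff.2 (T_ne ht n m)
  simp only [T, norm_div, norm_mul, norm_pow, norm_one, Complex.norm_natCast]
  set X := ‖(n : ℂ) ^ 2 * t ^ 2 - (m : ℂ) ^ 2‖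
  rw [div_le_iff₀ (by positivity)]
  have : (‖t‖ / t.im) ^ 2 * (1 / ((n : ℕ) : ℝ) ^ 2 * (1 / ((m : ℕ) : ℝ) ^ 2)) * (((n : ℕ) : ℝ) ^ 2 * X)
    = X * ‖t‖ ^ 2 / ((m : ℕ) * t.im) ^ 2 := by field_simp
  rw [this, le_div_iff₀ (by positivity)]
  linarith

noncomputable def SS (t : ℂ) : ℂ := ∑' p : ℕ+ × ℕ+, T t p

lemma SS_eq {t : ℂ} (ht : 0 < t.im) : SS t + SS (-1 / t) = - ((π : ℂ) ^ 2 / 6) ^ 2 := by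
  have ht0 := ne_zero_of_im ht
  have hs := T_summable (im_S ht)
  have e : SS (-1 / t) = ∑' p : ℕ+ × ℕ+, T (-1 / t) p.swap :=
    ((Equiv.prodComm ℕ+ ℕ+).tsum_eq (T (-1 / t))).symm
  have hs' : Summable (fun p : ℕ+ × ℕ+ => T (-1 / t) p.swap) := ((Equiv.prodComm ℕ+ ℕ+).summable_iff).2 hs
  rw [e, SS, ← (T_summable ht).tsum_add hs']
  have h2 : ((π : ℂ) ^ 2 / 6) ^ 2 = ∑' p : ℕ+ × ℕ+, (1 / (p.1 : ℂ) ^ 2) * (1 / (p.2 : ℂ) ^ 2) := by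
    rw [sq]
    conv_lhs => rw [← Z2.tsum_eq]
    exact tsum_mul_tsum_of_summable_norm Z2.summable.norm Z2.summable.norm
  rw [h2, ← tsum_neg]
  refine tsum_congr fun p => ?_
  obtain ⟨n, m⟩ := p
  have h1 := T_ne ht n m
  have h3 := T_ne (im_S ht) m n
  have hn : (n : ℂ) ≠ 0 := by simp
  have hm : (m : ℂ) ≠ 0 := by simp
  simp only [T, Prod.swap]
  have h4 : (m : ℂ) ^ 2 * (-1 / t) ^ 2 - (n : ℂ) ^ 2 = -((n : ℂ) ^ 2 * t ^ 2 - (m : ℂ) ^ 2) / t ^ 2 := by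
    field_simp; ring
  rw [h4]
  set X := (n : ℂ) ^ 2 * t ^ 2 - (m : ℂ) ^ 2 with hX
  field_simp
  rw [hX]; ring

noncomputable def z3 : ℂ := ∑' n : ℕ+, 1 / (n : ℂ) ^ 3
noncomputable def ff (t : ℂ) : ℂ := - I * (z3 + 2 * qs hh t)

lemma cot_z {z : ℂ} (hz : 0 < z.im) : -(π * I) - 2 * π * I * (∑' k : ℕ+, qq z ^ (k : ℕ))
     = 1 / z + ∑' m : ℕ+, (1 / (z - m) + 1 / (z + m)) := by
  have h1 : π * Complex.cot (π * z) = π * I - 2 * π * I * ∑' n : ℕ, qq z ^ n :=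
    pi_mul_cot_pi_q_exp ⟨z, hz⟩
  have h2 : π * Complex.cot (π * z) = 1 / z + ∑' m : ℕ+, (1 / (z - m) + 1 / (z + m)) :=
    cot_series_rep (UpperHalfPlane.coe_mem_integerComplement ⟨z, hz⟩)
  have hs : Summable (fun n : ℕ => qq z ^ n) := summable_geometric_of_norm_lt_one (norm_qq_lt_one hz)
  have h3 := tsum_zero_pnat_eq_tsum_nat (f := fun n : ℕ => qq z ^ n) hs
  simp only [pow_zero] at h3
  rw [← h2, h1, ← h3]
  ring

lemma cot_e3 {t : ℂ} (ht : 0 < t.im) (n : ℕ+) : ∑' m : ℕ+, (1 / ((n : ℂ) * t - m) + 1 / ((n : ℂ) * t + m)) = 2 * t * (n : ℂ) ^ 3 * ∑' m : ℕ+, T t (n, m) := by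
  have hn : (n : ℂ) ≠ 0 := by simp
  rw [← tsum_mul_left]
  refine tsum_congr fun m => ?_
  have h3 := T_ne ht n m
  have e : (n : ℂ) ^ 2 * t ^ 2 - (m : ℂ) ^ 2 = (n * t - m) * (n * t + m) := by ring
  have h5 : (n : ℂ) * t - m ≠ 0 := by intro h; rw [e, h] at h3; simp at h3
  have h6 : (n : ℂ) * t + m ≠ 0 := by intro h; rw [e, h] at h3; simp at h3
  simp only [T]
  rw [e]
  generalize (n : ℂ) = N at *
  generalize (m : ℂ) = M at *
  field_simp
  ring

lemma cot_alg {t N X Y Z : ℂ} (ht : t ≠ 0) (hn : N ≠ 0)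
   (h : -(Z * I) - 2 * Z * I * X = 1 / (N * t) + 2 * t * N ^ 3 * Y) :
   -(Z * I) * (1 / N ^ 3) - 2 * Z * I * (X / N ^ 3) = 1 / t * (1 / N ^ 4) + 2 * t * Y := by
  have : -(Z * I) * (1 / N ^ 3) - 2 * Z * I * (X / N ^ 3) = (-(Z * I) - 2 * Z * I * X) / N ^ 3 := by ring
  rw [this, h]
  field_simp

lemma cot_n {t : ℂ} (ht : 0 < t.im) (n : ℕ+) :
    -(π * I) * (1 / (n : ℂ) ^ 3) - 2 * π * I * (∑' k : ℕ+, qq t ^ (n * k : ℕ) / (n : ℂ) ^ 3)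
     = 1 / t * (1 / (n : ℂ) ^ 4) + 2 * t * ∑' m : ℕ+, T t (n, m) := by
  have hn : (n : ℂ) ≠ 0 := by simp
  have hnp : (0 : ℝ) < (n : ℕ) := by exact_mod_cast n.pos
  have ht0 := ne_zero_of_im ht
  have him : 0 < ((n : ℂ) * t).im := by
    rw [show (n : ℂ) * t = (((n : ℕ) : ℝ) : ℂ) * t by push_cast; rfl, Complex.im_ofReal_mul]
    exact mul_pos hnp ht
  have h2 := cot_z him
  have hq : qq ((n : ℂ) * t) = qq t ^ (n : ℕ) := by
    rw [qq, qq, ← Complex.exp_nat_mul]; congr 1; ring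
  rw [hq, cot_e3 ht] at h2
  have e4 : (∑' k : ℕ+, qq t ^ (n * k : ℕ) / (n : ℂ) ^ 3) = (∑' k : ℕ+, (qq t ^ (n : ℕ)) ^ (k : ℕ)) / (n : ℂ) ^ 3 := by
    rw [← tsum_div_const]
    refine tsum_congr fun k => ?_
    rw [pow_mul]
  rw [e4]
  exact cot_alg ht0 hn h2

lemma ff_SS {t : ℂ} (ht : 0 < t.im) : π * ff t = 1 / t * (π ^ 4 / 90) + 2 * t * SS t := by
  have hr := norm_qq_lt_one ht
  have a1 : HasSum (fun n : ℕ+ => ∑' k : ℕ+, qq t ^ (n * k : ℕ) / (n : ℂ) ^ 3) (qs hh t) := by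
    rw [← lam_tsum ht]
    exact ((lam_summable hr).prod).hasSum
  have a2 : HasSum (fun n : ℕ+ => ∑' m : ℕ+, T t (n, m)) (SS t) := by
    rw [SS, (T_summable ht).tsum_prod]
    exact ((T_summable ht).prod).hasSum
  have b1 := (Z3s.hasSum.mul_left (-(π * I))).sub (a1.mul_left (2 * π * I))
  have b2 := (Z4.mul_left (1 / t)).add (a2.mul_left (2 * t))
  rw [funext fun n => cot_n ht n] at b1
  have := b1.unique b2
  rw [ff, z3]
  linear_combination this

noncomputable def RR (t : ℂ) : ℂ := π ^ 3 * ((1 / t + t ^ 3) / 90 - t / 18)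

lemma ff_S {t : ℂ} (ht : 0 < t.im) : ff t - t ^ 2 * ff (-1 / t) = RR t := by
  have ht0 := ne_zero_of_im ht
  have h1 := ff_SS ht
  have h2 := ff_SS (im_S ht)
  have h3 := SS_eq ht
  refine mul_left_cancel₀ pi_C ?_
  rw [RR]
  have h4 : t ^ 2 * (π * ff (-1 / t)) = - t ^ 3 * (π ^ 4 / 90) - 2 * t * SS (-1 / t) := by
    rw [h2]; field_simp; ring
  linear_combination h1 - h4 + 2 * t * h3

end S9


namespace S9
open Complex Filter Topology
open scoped Real ArithmeticFunction.sigma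

noncomputable def s3 : ℂ := ((Real.sqrt 3 : ℝ) : ℂ)
noncomputable def s5 : ℂ := ((Real.sqrt 5 : ℝ) : ℂ)
lemma s3_sq : s3 ^ 2 = 3 := by
  rw [s3, ← Complex.ofReal_pow, Real.sq_sqrt (by norm_num)]; norm_num
lemma s5_sq : s5 ^ 2 = 5 := by
  rw [s5, ← Complex.ofReal_pow, Real.sq_sqrt (by norm_num)]; norm_num
lemma s3_ne : s3 ≠ 0 := by
  intro h; have := s3_sq; rw [h] at this; norm_num at this
lemma s5_ne : s5 ≠ 0 := by
  intro h; have := s5_sq; rw [h] at this; norm_num at this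

noncomputable def u0 : ℂ := (1 + I * (s3 * s5)) / 4
noncomputable def v0 : ℂ := (1 + I * (s3 * s5)) / 2

lemma v0_half : v0 / 2 = u0 := by rw [v0, u0]; ring
lemma u0_two : 2 * u0 = v0 := by rw [v0, u0]; ring
lemma v0_im : 1.9 < v0.im := by
  have h : v0 = ((1 / 2 : ℝ) : ℂ) + ((Real.sqrt 3 * Real.sqrt 5 / 2 : ℝ) : ℂ) * I := by
    rw [v0, s3, s5]; push_cast; ring
  have h2 : v0.im = Real.sqrt 3 * Real.sqrt 5 / 2 := by
    rw [h, Complex.add_im, Complex.ofReal_im, Complex.im_ofReal_mul]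
    simp
  have h3 : (1.73 : ℝ) < Real.sqrt 3 := Real.lt_sqrt_of_sq_lt (by norm_num)
  have h5 : (2.23 : ℝ) < Real.sqrt 5 := Real.lt_sqrt_of_sq_lt (by norm_num)
  rw [h2]; nlinarith
lemma v0_im0 : 0 < v0.im := by have := v0_im; linarith
lemma u0_im : 0 < u0.im := by rw [← v0_half]; exact imh v0_im0

lemma u0_quad : u0 ^ 2 = u0 / 2 - 1 := by
  rw [u0]
  linear_combination (s3 * s5) ^ 2 / 16 * I_sq - s5 ^ 2 / 16 * s3_sq - 3 / 16 * s5_sq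
lemma u0_S : -1 / u0 = u0 - 1 / 2 := by
  have := ne_zero_of_im u0_im
  field_simp
  linear_combination (-2) * u0_quad
lemma u1_eq : (v0 + 1) / 2 = -1 / u0 + 1 := by
  rw [u0_S, ← v0_half]; ring

noncomputable def rr : ℂ := s3 * (16 - 7 * s5) / 22

lemma key1 : C1 v0 ^ 2 - 30 * (b v0 * C1 v0) + 33 * b v0 ^ 2
    = u0 ^ 4 * (C1 v0 ^ 2 + 30 * (b v0 * C1 v0) + 33 * b v0 ^ 2) := by
  have h0 := v0_im0
  have j0 := J1 u0_im
  have j1 := J1 (im_S u0_im)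
  have e0 : C1 u0 = -2 * C2 v0 := by rw [← v0_half]; exact C1_half
  have e1 : C1 (-1 / u0) = -2 * C3 v0 := by
    rw [← C2_T, ← C1_half, u1_eq, C1_T]
  have e2 : Q (2 * (-1 / u0)) = Q v0 := by
    rw [← Q_T, u0_S, show 2 * (u0 - 1 / 2) + 1 = 2 * u0 by ring, u0_two]
  rw [e0, u0_two] at j0
  rw [e1, e2, Q_S u0_im] at j1
  have hc3 := C3_eq h0
  have hb : C2 v0 = (-3 * b v0 - C1 v0) / 2 := by rw [b]; ring
  have hq := b_sq h0
  rw [hc3, hb] at j1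
  rw [hb] at j0
  rw [hq] at j0 j1
  linear_combination j1 - u0 ^ 4 * j0

lemma key2 : s3 * s5 * (C1 v0 ^ 2 + 33 * b v0 ^ 2) * I = 7 * 30 * (b v0 * C1 v0) := by
  have h := key1
  have hu0 := ne_zero_of_im u0_im
  have hi : u0 * (1 / 2 - u0) = 1 := by linear_combination (-1) * u0_quad
  have h2 : (1 / 2 - u0) ^ 2 * (C1 v0 ^ 2 - 30 * (b v0 * C1 v0) + 33 * b v0 ^ 2)
    = u0 ^ 2 * (C1 v0 ^ 2 + 30 * (b v0 * C1 v0) + 33 * b v0 ^ 2) := by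
    rw [h]
    have : (1 / 2 - u0) ^ 2 * u0 ^ 4 = u0 ^ 2 := by
      calc _ = u0 ^ 2 * (u0 * (1 / 2 - u0)) ^ 2 := by ring
        _ = _ := by rw [hi]; ring
    rw [← mul_assoc, this]
  have e1 : (1 / 2 - u0) ^ 2 = (-7 - I * (s3 * s5)) / 8 := by
    have : (1 / 2 - u0) ^ 2 = 1 / 4 - u0 + u0 ^ 2 := by ring
    rw [this, u0_quad, u0]; ring
  have e2 : u0 ^ 2 = (-7 + I * (s3 * s5)) / 8 := by
    rw [u0_quad, u0]; ring
  rw [e1, e2] at h2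
  linear_combination (-4) * h2

lemma C1_v0_ne : C1 v0 ≠ 0 := by
  have := C1_lb v0_im
  intro h; rw [h] at this; norm_num at this

lemma b_v0 : b v0 = 2 / 3 * I * rr * C1 v0 := by
  have hc := C1_v0_ne
  have h3 := s3_sq
  have h5 := s5_sq
  have hf : (b v0 - 2 / 3 * I * rr * C1 v0) * (b v0 + 2 / 3 * I * (s3 * (16 + 7 * s5) / 22) * C1 v0) = 0 := by
    have h := key2
    have hs : s3 * s5 ≠ 0 := mul_ne_zero s3_ne s5_ne
    refine mul_left_cancel₀ (mul_ne_zero hs I_ne_zero) ?_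
    have hx : I ^ 2 * s3 ^ 2 * s5 ^ 2 = -15 := by rw [I_sq, h3, h5]; norm_num
    have hy : I ^ 2 * s3 ^ 2 * (256 - 49 * s5 ^ 2) = -33 := by rw [I_sq, h3, h5]; norm_num
    rw [rr]
    linear_combination 1 / 33 * h + 14 / 33 * (b v0 * C1 v0) * hx
      - 4 / 9 / 484 * (s3 * s5 * I * C1 v0 ^ 2) * hy
  rcases mul_eq_zero.1 hf with h | h
  · linear_combination h
  exfalso
  have hb : b v0 = -(2 / 3 * I * (s3 * (16 + 7 * s5) / 22) * C1 v0) := by linear_combination h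
  have hn : ‖b v0‖ = 2 / 3 * (Real.sqrt 3 * (16 + 7 * Real.sqrt 5) / 22) * ‖C1 v0‖ := by
    rw [hb, norm_neg, norm_mul]
    congr 1
    have : (2 / 3 * I * (s3 * (16 + 7 * s5) / 22) : ℂ) = ((2 / 3 * (Real.sqrt 3 * (16 + 7 * Real.sqrt 5) / 22) : ℝ) : ℂ) * I := by
      rw [s3, s5]; push_cast; ring
    rw [this, norm_mul, Complex.norm_I, mul_one, Complex.norm_real, Real.norm_of_nonneg (by positivity)]
  have h1 := b_bd v0_im
  have h2 := C1_lb v0_im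
  have h3 : (1.7 : ℝ) < Real.sqrt 3 := Real.lt_sqrt_of_sq_lt (by norm_num)
  have h5 : (2 : ℝ) < Real.sqrt 5 := Real.lt_sqrt_of_sq_lt (by norm_num)
  have h6 : (1.7 * 30 : ℝ) ≤ Real.sqrt 3 * (16 + 7 * Real.sqrt 5) :=
    mul_le_mul h3.le (by linarith) (by norm_num) (by positivity)
  have h7 : (2 / 3 * (1.7 * 30 / 22)) * (99 / 100) ≤ ‖b v0‖ := by
    rw [hn]
    exact mul_le_mul (by linarith) h2 (by norm_num) (by positivity)
  norm_num at h7
  linarith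

noncomputable def ww : ℂ := 1 + (501 - 224 * s5) / 363

lemma rr_sq : 4 / 9 * rr ^ 2 = (501 - 224 * s5) / 363 := by
  rw [rr]
  linear_combination (4/9 * (16 - 7 * s5) ^ 2 / 484) * s3_sq + 49 / 363 * s5_sq

lemma W_v0 : W v0 = C1 v0 ^ 2 * ww := by
  rw [W, b_v0, ww, ← rr_sq]
  linear_combination (-4 / 9 * rr ^ 2 * C1 v0 ^ 2) * I_sq

lemma ww_ne : ww ≠ 0 := by
  intro h
  have := W_ne v0_im0
  rw [W_v0, h] at this; simp at this

lemma zz_v0 : zz v0 = 1 / 64 * ((s5 - 1) / 2) ^ 8 := by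
  have hc := C1_v0_ne
  have hw := ww_ne
  have : zz v0 = 4 / 9 * rr ^ 2 / ww := by
    rw [zz, W_v0, b_v0]
    field_simp
    linear_combination (-36 * rr ^ 2) * I_sq
  rw [this, rr_sq, div_eq_iff hw, ww]
  have e8 : ((s5 - 1) / 2) ^ 8 = (47 - 21 * s5) / 2 := by
    have e2 : ((s5 - 1) / 2) ^ 2 = (3 - s5) / 2 := by linear_combination 1 / 4 * s5_sq
    have e4 : ((s5 - 1) / 2) ^ 4 = (7 - 3 * s5) / 2 := by
      rw [show ((s5 - 1) / 2) ^ 4 = (((s5 - 1) / 2) ^ 2) ^ 2 by ring, e2]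
      linear_combination 1 / 4 * s5_sq
    rw [show ((s5 - 1) / 2) ^ 8 = (((s5 - 1) / 2) ^ 4) ^ 2 by ring, e4]
    linear_combination 9 / 4 * s5_sq
  rw [e8]
  linear_combination (-224 * 21 / (363 * 128)) * s5_sq

lemma P_v0 : P v0 = C1 v0 * (1 / 2 + (16 * s5 - 35) / 110) + 6 / (π * (s3 * s5)) := by
  have hp := pi_C
  have hs3 := s3_ne
  have hs5 := s5_ne
  have h2 : C2 v0 = P u0 / 2 - P v0 := by rw [C2, v0_half]
  have h3 : C3 v0 = (u0 ^ 2 * P u0 + 6 * u0 / (π * I)) / 2 - P v0 := by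
    rw [C3, u1_eq, P_T, P_S u0_im]
  have hc3 := C3_eq v0_im0
  have hb : C2 v0 = (-3 * b v0 - C1 v0) / 2 := by rw [b]; ring
  rw [b_v0] at hb
  rw [hb] at h2 hc3
  rw [hc3] at h3
  -- eliminate P u0
  have h4 : (u0 ^ 2 - 1) * P v0 = C1 v0 * (-1 / 2 * (1 - u0 ^ 2) + I * rr * (1 + u0 ^ 2)) - 3 * u0 / (π * I) := by
    linear_combination u0 ^ 2 * h2 - h3
  have hI : 3 * u0 / (π * I) = - (3 * u0 * I / π) := by
    have := I_ne_zero
    field_simp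
    linear_combination u0 * I_sq
  have e1 : u0 ^ 2 - 1 = u0 * (I * (s3 * s5) / 2) := by
    have : u0 * (I * (s3 * s5) / 2) = u0 * (2 * u0 - 1 / 2) := by rw [u0]; ring
    rw [this]; linear_combination (-1) * u0_quad
  have e2 : 1 + u0 ^ 2 = u0 / 2 := by rw [u0_quad]; ring
  have hu := ne_zero_of_im u0_im
  have e3 : rr / (s3 * s5) = (16 * s5 - 35) / 110 := by
    rw [rr]; field_simp
    linear_combination (-352) * s5_sq
  rw [← e3]
  have h5 : I * (s3 * s5) / 2 * P v0 = C1 v0 * (1 / 2 * (I * (s3 * s5) / 2) + I * rr / 2) + 3 * I / π := by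
    refine mul_left_cancel₀ hu ?_
    rw [hI, e2, show 1 - u0 ^ 2 = -(u0 ^ 2 - 1) by ring, e1] at h4
    linear_combination h4
  have hi := I_ne_zero
  have hs : I * (s3 * s5) / 2 ≠ 0 := by simp [hs3, hs5]
  refine mul_left_cancel₀ hs ?_
  rw [h5]
  field_simp
  ring

end S9


namespace S9
open Complex Filter Topology
open scoped Real ArithmeticFunction.sigma

lemma qs_odd {a : ℕ → ℂ} (h : PG a) {t : ℂ} (ht : 0 < t.im) :
    qs (fun n => if Odd n then a n else 0) t = (qs a t - qs a (t - 1 / 2)) / 2 := by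
  have ht2 : 0 < (t - 1 / 2).im := by
    have : (t - 1 / 2).im = t.im := by simp
    rw [this]; exact ht
  have hq : qq (t - 1 / 2) = - qq t := by
    rw [qq, qq, show 2 * (π : ℂ) * I * (t - 1 / 2) = 2 * π * I * t - π * I by ring, Complex.exp_sub, Complex.exp_pi_mul_I]
    ring
  rw [qs, qs, qs, ← (h.summable ht).tsum_sub (h.summable ht2), ← tsum_div_const]
  refine tsum_congr fun n => ?_
  rw [hq]
  rcases Nat.even_or_odd n with hn | hn
  · rw [if_neg (by simpa using hn), hn.neg_pow]; ring
  · rw [if_pos hn, hn.neg_pow]; ring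

lemma ff_d {t : ℂ} (ht : 0 < t.im) : HasDerivAt ff (4 * π * qs (fun n => n * hh n) t) t := by
  have h := (((PG_hh.hasDerivAt ht).const_mul 2).const_add z3).const_mul (-I)
  refine h.congr_deriv ?_
  linear_combination (-4 * π * qs (fun n => n * hh n) t) * I_sq

lemma RR_d {t : ℂ} (ht : t ≠ 0) : HasDerivAt RR (π ^ 3 * ((-1 / t ^ 2 + 3 * t ^ 2) / 90 - 1 / 18)) t := by
  have h1 : HasDerivAt (fun t : ℂ => 1 / t) (-1 / t ^ 2) t := by
    have := (S_d ht).neg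
    refine (this.congr_deriv (by ring)).congr_of_eventuallyEq ?_
    filter_upwards with x
    simp [neg_div]
  have h2 : HasDerivAt (fun t : ℂ => t ^ 3) (3 * t ^ 2) t := by
    simpa using hasDerivAt_pow 3 t
  exact ((((h1.add h2).div_const 90).sub ((hasDerivAt_id t).div_const 18)).const_mul ((π : ℂ) ^ 3))

lemma ff_S' {t : ℂ} (ht : 0 < t.im) :
    4 * π * qs (fun n => n * hh n) t - 2 * t * ff (-1 / t) - 4 * π * qs (fun n => n * hh n) (-1 / t)
     = π ^ 3 * ((-1 / t ^ 2 + 3 * t ^ 2) / 90 - 1 / 18) := by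
  have ht0 := ne_zero_of_im ht
  have h1 : HasDerivAt (fun t => ff (-1 / t)) (4 * π * qs (fun n => n * hh n) (-1 / t) * (1 / t ^ 2)) t :=
    HasDerivAt.comp (h₂ := ff) t (ff_d (im_S ht)) (S_d ht0)
  have h2 : HasDerivAt (fun t : ℂ => t ^ 2) (2 * t) t := by
    simpa using hasDerivAt_pow 2 t
  have h3 := (ff_d ht).sub (h2.mul h1)
  have h4 := h3.unique ((RR_d ht0).congr_of_eventuallyEq (by
    filter_upwards [ev_im ht] with w hw
    exact ff_S hw))
  rw [← h4]
  field_simp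
  ring

lemma Gval : G1 v0 + G0 v0 / (π * (s3 * s5)) = π ^ 2 * I * (s3 * s5) / 3600 := by
  have hp := pi_C
  have hs3 := s3_ne
  have hs5 := s5_ne
  have hu := ne_zero_of_im u0_im
  have g0 := G0_eq v0_im
  have g1 := G1_eq v0_im
  rw [v0_half] at g0 g1
  have e0 : qs ho u0 = (qs hh u0 - qs hh (-1 / u0)) / 2 := by
    rw [u0_S]; exact qs_odd PG_hh u0_im
  have e1 : qs (fun n => n * ho n) u0 = (qs (fun n => n * hh n) u0 - qs (fun n => n * hh n) (-1 / u0)) / 2 := by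
    rw [u0_S, ← qs_odd PG_hh.mul u0_im]
    congr 1
    ext n
    rw [ho]; split_ifs <;> simp
  have f0 := ff_S u0_im
  have f1 := ff_S' u0_im
  have d0 : ff u0 - ff (-1 / u0) = -4 * I * qs ho u0 := by rw [e0, ff, ff]; ring
  have hi : 1 / u0 = 1 / 2 - u0 := by
    have := u0_S
    rw [neg_div] at this
    linear_combination (-1) * this
  have hk : 1 - u0 ^ 2 = -(u0 * (I * (s3 * s5) / 2)) := by
    have : u0 * (I * (s3 * s5) / 2) = u0 * (2 * u0 - 1 / 2) := by rw [u0]; ring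
    rw [this]; linear_combination u0_quad
  set F := ff (-1 / u0)
  have f2 : F * (1 - u0 ^ 2) - 4 * I * qs ho u0 = RR u0 := by
    linear_combination f0 - d0
  have hu3 : u0 ^ 3 = -3 / 4 * u0 - 1 / 2 := by
    linear_combination (u0 + 1 / 2) * u0_quad
  have hR : RR u0 = π ^ 3 * (-3 / 40 * u0) := by
    rw [RR, hi, hu3]; ring
  have hR' : (π : ℂ) ^ 3 * ((-1 / u0 ^ 2 + 3 * u0 ^ 2) / 90 - 1 / 18) = π ^ 3 * ((2 * u0 - 29 / 4) / 90) := by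
    have : -1 / u0 ^ 2 = - (1 / 2 - u0) ^ 2 := by rw [← hi]; field_simp
    rw [this]
    linear_combination (π ^ 3 * (2 / 90)) * u0_quad
  rw [hR'] at f1
  rw [hR, hk] at f2
  rw [g0, g1]
  -- F in terms of H
  have f3 : 2 * u0 * F * (I * (s3 * s5)) = - 4 * (4 * I * qs ho u0 + π ^ 3 * (-3 / 40 * u0)) := by
    linear_combination (-4) * f2
  have f4 : 8 * π * qs (fun n => n * ho n) u0 - 2 * u0 * F = π ^ 3 * ((2 * u0 - 29 / 4) / 90) := by
    rw [e1]; linear_combination f1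
  have hss : (s3 * s5) ^ 2 = 15 := by rw [mul_pow, s3_sq, s5_sq]; norm_num
  have hs : s3 * s5 ≠ 0 := mul_ne_zero hs3 hs5
  have hue : u0 = (1 + I * (s3 * s5)) / 4 := rfl
  generalize s3 * s5 = s at *
  generalize qs (fun n => n * ho n) u0 = H1 at *
  generalize qs ho u0 = H at *
  clear_value F
  clear e0 e1 g0 g1 d0 f0 f1 f2 hR hR' hk hi hu3
  have h5 : (8 * π * H1 - π ^ 3 * ((2 * u0 - 29 / 4) / 90)) * (I * s) = - 4 * (4 * I * H + π ^ 3 * (-3 / 40 * u0)) := by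
    linear_combination f3 + (I * s) * f4
  rw [hue] at h5
  have h6 : 8 * π * H1 * s + 16 * H = π ^ 3 * (I * 15) / 1800 := by
    have hI := I_ne_zero
    refine mul_left_cancel₀ hI ?_
    linear_combination h5 + π ^ 3 * I ^ 2 / 180 * hss + π ^ 3 * (3 / 40) * I_sq
  have : 4 * H1 + 8 * H / (π * s) = (8 * π * H1 * s + 16 * H) / (2 * π * s) := by field_simp; ring
  rw [this, h6]
  field_simp
  rw [hss]; norm_num

lemma phval : (42 * s5 + 30) / 32 * ph 1 (zz v0) + (5 * s5 - 1) / 32 * ph 0 (zz v0)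
    = (42 * s5 + 30) / 32 * (π ^ 2 * (s3 * s5) / 3600 * (3 / 2) * ww / rr) := by
  have h := Gval
  have hp := pi_C
  have hs3 := s3_ne
  have hs5 := s5_ne
  have hc := C1_v0_ne
  have hw := ww_ne
  have hr : rr ≠ 0 := by
    intro h
    have := b_v0
    rw [h] at this
    exact b_ne v0_im0 (by rw [this]; ring)
  have hb : bW v0 * C1 v0 = 2 / 3 * I * rr / ww := by
    rw [bW, W_v0, b_v0]; field_simp
  have h1 : G1 v0 + G0 v0 / (π * (s3 * s5))
      = bW v0 * C1 v0 * (ph 1 (zz v0) - (8 * s5 - 45) / 330 * ph 0 (zz v0)) := by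
    rw [G1, G0, P_v0]
    field_simp
    ring
  rw [h1, hb] at h
  have h2 : ph 1 (zz v0) - (8 * s5 - 45) / 330 * ph 0 (zz v0) = π ^ 2 * (s3 * s5) / 3600 * (3 / 2) * ww / rr := by
    have hI := I_ne_zero
    have hk : 2 / 3 * I * rr / ww ≠ 0 := by
      refine div_ne_zero (mul_ne_zero (mul_ne_zero (by norm_num) hI) hr) hw
    refine mul_left_cancel₀ hk ?_
    rw [h]; field_simp
  rw [← h2]
  linear_combination (42 * 8 / (32 * 330) * ph 0 (zz v0)) * s5_sq

lemma final_alg : 1 / 8 * ((s5 - 1) / 2) ^ 4 * ((42 * s5 + 30) / 32 * (π ^ 2 * (s3 * s5) / 3600 * (3 / 2) * ww / rr))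
    = π ^ 2 / 240 := by
  have hs3 := s3_ne
  have h11 : (16 - 7 * s5) * (16 + 7 * s5) = 11 := by linear_combination (-49) * s5_sq
  have hn : 16 - 7 * s5 ≠ 0 := by
    intro h; rw [h] at h11; norm_num at h11
  have e4 : ((s5 - 1) / 2) ^ 4 = (7 - 3 * s5) / 2 := by
    have e2 : ((s5 - 1) / 2) ^ 2 = (3 - s5) / 2 := by linear_combination 1 / 4 * s5_sq
    rw [show ((s5 - 1) / 2) ^ 4 = (((s5 - 1) / 2) ^ 2) ^ 2 by ring, e2]
    linear_combination 1 / 4 * s5_sq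
  have e : (s3 * s5) * ww / rr = s5 * ww * 22 / (16 - 7 * s5) := by
    rw [rr]; field_simp
  have e' : (s3 * s5) * ww / rr = s5 * ww * 2 * (16 + 7 * s5) := by
    rw [e, div_eq_iff hn]; linear_combination (-2 * s5 * ww) * h11
  rw [e4]
  have : 1 / 8 * ((7 - 3 * s5) / 2) * ((42 * s5 + 30) / 32 * (π ^ 2 * (s3 * s5) / 3600 * (3 / 2) * ww / rr))
    = 1 / 8 * ((7 - 3 * s5) / 2) * ((42 * s5 + 30) / 32 * (π ^ 2 / 3600 * (3 / 2) * ((s3 * s5) * ww / rr))) := by ring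
  rw [this, e', ww]
  have p3 : s5 ^ 3 = 5 * s5 := by linear_combination s5 * s5_sq
  have p4 : s5 ^ 4 = 25 := by linear_combination (s5 ^ 2 + 5) * s5_sq
  have p5 : s5 ^ 5 = 25 * s5 := by linear_combination (s5 ^ 3 + 5 * s5) * s5_sq
  ring_nf
  rw [p5, p4, p3, s5_sq]
  ring

theorem main :
    ∑' n : ℕ,
        ((ascPochhammer ℝ n).eval (1 : ℝ)) ^ 3 / ((ascPochhammer ℝ n).eval (3 / 2 : ℝ)) ^ 3 *
          ((42 * Real.sqrt 5 + 30) / 32 * (n : ℝ) + (26 * Real.sqrt 5 + 14) / 32) *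
          (1 / (2 : ℝ) ^ (6 * n + 3)) * ((Real.sqrt 5 - 1) / 2) ^ (8 * n + 4) =
      π ^ 2 / 240 := by
  apply Complex.ofReal_injective
  rw [Complex.ofReal_tsum]
  have hz := zz_bd v0_im
  have h1 := (ph_summable 1 hz).hasSum.mul_left ((42 * s5 + 30) / 32)
  have h0 := (ph_summable 0 hz).hasSum.mul_left ((5 * s5 - 1) / 32)
  have h := ((h1.add h0).mul_left (1 / 8 * ((s5 - 1) / 2) ^ 4)).tsum_eq
  have hv := phval
  rw [ph, ph] at hv
  rw [hv, final_alg] at h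
  push_cast
  rw [← h]
  refine tsum_congr fun n => ?_
  rw [zz_v0, cf, cf, ar, ← s5, mul_pow, ← pow_mul, pow_add, pow_add, pow_mul (2 : ℂ) 6 n]
  push_cast
  have : (1 / 64 : ℂ) ^ n = 1 / 64 ^ n := by rw [div_pow, one_pow]
  rw [this, show (2 : ℂ) ^ 6 = 64 by norm_num]
  have h64 : (64 : ℂ) ^ n ≠ 0 := pow_ne_zero _ (by norm_num)
  generalize ((s5 - 1) / 2) ^ (8 * n) = Y
  generalize ((s5 - 1) / 2) ^ 4 = Y2
  ring

end S9

theorem stmt_9 :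
    ∑' n : ℕ,
        ((ascPochhammer ℝ n).eval (1 : ℝ)) ^ 3 / ((ascPochhammer ℝ n).eval (3 / 2 : ℝ)) ^ 3 *
          ((42 * Real.sqrt 5 + 30) / 32 * (n : ℝ) + (26 * Real.sqrt 5 + 14) / 32) *
          (1 / (2 : ℝ) ^ (6 * n + 3)) * ((Real.sqrt 5 - 1) / 2) ^ (8 * n + 4) =
      π ^ 2 / 240 := by
  exact S9.main
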